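/- arXiv:2604.14087 — 3 statements merged into one kernel-verified Lean document; each statement's English description precedes it below -/
import Mathlib

section
/- Let B be the open unit ball in ℝ³ and let a = (a^{ij}) : B → (real symmetric 3×3 matrices) be a C² map with a(0) = I and with all first-order partial derivatives of a vanishing at 0. Let f(x) = Σ_{i,j} ∂_i ( a^{ij}(x) ∂_j (|x|^{-1}) ) for x ∈ B ∖ {0}. Then for every φ ∈ C_c^∞(B) both integrals below converge absolutely and ∫_B Σ_{i,j} a^{ij}(x) ∂_i φ(x) ∂_j (|x|^{-1}) dx = 4π φ(0) − ∫_B φ(x) f(x) dx. -/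
open MeasureTheory Metric Set
open scoped BigOperators

noncomputable section

/-- Euclidean 3-space. -/
abbrev E3 := EuclideanSpace ℝ (Fin 3)

/-- Regularised norm. -/
def NN (c : ℝ) (x : E3) : ℝ := √(‖x‖ ^ 2 + c ^ 2)

/-- Gradient of the regularised kernel. -/
def PP (c : ℝ) (j : Fin 3) (x : E3) : ℝ := -(x j) / NN c x ^ 3

/-- Hessian of the regularised kernel. -/
def QQ (c : ℝ) (i j : Fin 3) (x : E3) : ℝ :=
  (if i = j then -1 / NN c x ^ 3 else 0) + 3 * x i * x j / NN c x ^ 5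

lemma NN_zero (x : E3) : NN 0 x = ‖x‖ := by simp [NN]

lemma norm_le_NN (c : ℝ) (x : E3) : ‖x‖ ≤ NN c x := by
  unfold NN
  exact Real.le_sqrt_of_sq_le (by nlinarith [sq_nonneg c])

lemma NN_sq (c : ℝ) (x : E3) : NN c x ^ 2 = ‖x‖ ^ 2 + c ^ 2 := by
  unfold NN
  exact Real.sq_sqrt (by positivity)

lemma NN_pos {c : ℝ} (hc : 0 < c) (x : E3) : 0 < NN c x := by
  unfold NN; positivity

lemma NN_pos' {c : ℝ} {x : E3} (hx : x ≠ 0) : 0 < NN c x :=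
  lt_of_lt_of_le (norm_pos_iff.2 hx) (norm_le_NN c x)

lemma hasFDerivAt_NN {c : ℝ} {x : E3} (h : 0 < NN c x) :
    HasFDerivAt (NN c) ((1 / NN c x) • innerSL ℝ x) x := by
  have h1 : HasFDerivAt (fun y : E3 => ‖y‖ ^ 2 + c ^ 2) (2 • innerSL ℝ x) x :=
    ((hasStrictFDerivAt_norm_sq x).hasFDerivAt).add_const _
  have h2 : ‖x‖ ^ 2 + c ^ 2 ≠ 0 := by
    rw [← NN_sq]; positivity
  have h3 := h1.sqrt h2
  refine h3.congr_fderiv ?_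
  ext v
  simp only [NN, _root_.smul_apply, smul_eq_mul, nsmul_eq_mul]
  have : √(‖x‖ ^ 2 + c ^ 2) ≠ 0 := h.ne'
  simp
  field_simp

lemma inner_single (x : E3) (i : Fin 3) :
    inner ℝ x (EuclideanSpace.single i (1:ℝ)) = x i := by
  simp [EuclideanSpace.inner_single_right]

lemma fderiv_norm_inv {x : E3} (hx : x ≠ 0) (j : Fin 3) :
    fderiv ℝ (fun z : E3 => ‖z‖⁻¹) x (EuclideanSpace.single j 1) = PP 0 j x := by
  have h := hasFDerivAt_NN (c := 0) (NN_pos' hx)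
  have hN : NN 0 = fun z : E3 => ‖z‖ := funext NN_zero
  have h2 := (hasDerivAt_inv (NN_pos' (c := 0) hx).ne').comp_hasFDerivAt x h
  have h3 : (fun z : E3 => ‖z‖⁻¹) = (fun y => y⁻¹) ∘ NN 0 := by
    rw [hN]; rfl
  rw [h3, h2.fderiv]
  have := (NN_pos' (c := 0) hx).ne'
  simp only [_root_.smul_apply, innerSL_apply_apply, inner_single, PP, smul_eq_mul]
  field_simp

lemma hasFDerivAt_PP {c : ℝ} {x : E3} (h : 0 < NN c x) (j : Fin 3) :
    ∃ L : E3 →L[ℝ] ℝ, HasFDerivAt (PP c j) L x ∧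
      ∀ i, L (EuclideanSpace.single i 1) = QQ c i j x := by
  have h1 : HasFDerivAt (fun y : E3 => -(y j)) (-(EuclideanSpace.proj j : E3 →L[ℝ] ℝ)) x :=
    ((EuclideanSpace.proj j : E3 →L[ℝ] ℝ).hasFDerivAt).neg
  have h0 : (NN c x ^ 3) ≠ 0 := by positivity
  have h2 := (hasDerivAt_inv h0).comp_hasFDerivAt x ((hasFDerivAt_NN h).pow 3)
  have h3 := h1.mul h2
  refine ⟨_, h3, ?_⟩
  intro i
  simp only [_root_.smul_apply, innerSL_apply_apply, inner_single, smul_eq_mul, QQ,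
    _root_.add_apply, _root_.neg_apply, Function.comp]
  have := h.ne'
  by_cases hij : i = j
  · subst hij; simp; field_simp; ring
  · have hji : ¬ j = i := fun h => hij h.symm
    simp [hij, hji]; field_simp

lemma fderiv_PP {c : ℝ} {x : E3} (h : 0 < NN c x) (i j : Fin 3) :
    fderiv ℝ (PP c j) x (EuclideanSpace.single i 1) = QQ c i j x := by
  obtain ⟨L, hL, h2⟩ := hasFDerivAt_PP h j
  rw [hL.fderiv, h2]

lemma differentiableAt_PP {c : ℝ} {x : E3} (h : 0 < NN c x) (j : Fin 3) :
    DifferentiableAt ℝ (PP c j) x := by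
  obtain ⟨L, hL, h2⟩ := hasFDerivAt_PP h j
  exact hL.differentiableAt

lemma continuous_NN (c : ℝ) : Continuous (NN c) := by
  unfold NN; fun_prop

lemma continuous_PP {c : ℝ} (hc : 0 < c) (j : Fin 3) : Continuous (PP c j) := by
  unfold PP
  have := continuous_NN c
  refine Continuous.div (by fun_prop) (by fun_prop) (fun x => (pow_pos (NN_pos hc x) _).ne')

lemma continuous_QQ {c : ℝ} (hc : 0 < c) (i j : Fin 3) : Continuous (QQ c i j) := by
  unfold QQ
  have := continuous_NN c
  refine Continuous.add ?_ ?_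
  · split_ifs
    · exact Continuous.div (by fun_prop) (by fun_prop) (fun x => (pow_pos (NN_pos hc x) _).ne')
    · fun_prop
  · exact Continuous.div (by fun_prop) (by fun_prop) (fun x => (pow_pos (NN_pos hc x) _).ne')

lemma abs_coord_le (x : E3) (i : Fin 3) : |x i| ≤ ‖x‖ := by
  simpa using PiLp.norm_apply_le x i

lemma abs_PP_le (c : ℝ) (j : Fin 3) {x : E3} (hx : x ≠ 0) : |PP c j x| ≤ (‖x‖ ^ 2)⁻¹ := by
  have hp := norm_pos_iff.2 hx
  have hN := NN_pos' (c := c) hx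
  have h1 := norm_le_NN c x
  unfold PP
  rw [abs_div, abs_neg, abs_of_pos (pow_pos hN 3)]
  calc |x j| / NN c x ^ 3 ≤ ‖x‖ / ‖x‖ ^ 3 := by
        gcongr
        exact abs_coord_le x j
    _ = (‖x‖ ^ 2)⁻¹ := by field_simp

lemma abs_QQ_le (c : ℝ) (i j : Fin 3) {x : E3} (hx : x ≠ 0) :
    |QQ c i j x| ≤ 4 * (‖x‖ ^ 3)⁻¹ := by
  have hp := norm_pos_iff.2 hx
  have hN := NN_pos' (c := c) hx
  have h1 := norm_le_NN c x
  unfold QQ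
  have hA : |(if i = j then -1 / NN c x ^ 3 else 0)| ≤ (‖x‖ ^ 3)⁻¹ := by
    split_ifs
    · rw [abs_div, abs_neg, abs_one, abs_of_pos (pow_pos hN 3), one_div]
      gcongr
    · simp
  have hB : |3 * x i * x j / NN c x ^ 5| ≤ 3 * (‖x‖ ^ 3)⁻¹ := by
    rw [abs_div, abs_of_pos (pow_pos hN 5), abs_mul, abs_mul, abs_of_pos (by norm_num : (0:ℝ) < 3)]
    calc 3 * |x i| * |x j| / NN c x ^ 5 ≤ 3 * ‖x‖ * ‖x‖ / ‖x‖ ^ 5 := by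
          gcongr
          · exact abs_coord_le x i
          · exact abs_coord_le x j
      _ = _ := by field_simp
  calc _ ≤ _ := abs_add_le _ _
    _ ≤ (‖x‖ ^ 3)⁻¹ + 3 * (‖x‖ ^ 3)⁻¹ := add_le_add hA hB
    _ = _ := by ring

lemma sum_QQ {c : ℝ} {x : E3} (h : 0 < NN c x) :
    ∑ i, QQ c i i x = -3 * c ^ 2 / NN c x ^ 5 := by
  have h2 := NN_sq c x
  rw [EuclideanSpace.norm_sq_eq] at h2
  simp only [Fin.sum_univ_three, Real.norm_eq_abs, sq_abs] at h2
  simp only [QQ, Fin.sum_univ_three, if_true]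
  field_simp
  linear_combination (-3) * h2

open Filter Topology in
lemma tendsto_NN (u : ℕ → ℝ) (hu : Tendsto u atTop (𝓝 0)) (x : E3) :
    Tendsto (fun n => NN (u n) x) atTop (𝓝 (NN 0 x)) := by
  have : Continuous fun c => NN c x := by unfold NN; fun_prop
  exact (this.tendsto 0).comp hu

open Filter Topology in
lemma tendsto_PP (u : ℕ → ℝ) (hu : Tendsto u atTop (𝓝 0)) {x : E3} (hx : x ≠ 0) (j : Fin 3) :
    Tendsto (fun n => PP (u n) j x) atTop (𝓝 (PP 0 j x)) := by
  unfold PP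
  exact tendsto_const_nhds.div ((tendsto_NN u hu x).pow 3) (pow_pos (NN_pos' hx) _).ne'

open Filter Topology in
lemma tendsto_QQ (u : ℕ → ℝ) (hu : Tendsto u atTop (𝓝 0)) {x : E3} (hx : x ≠ 0) (i j : Fin 3) :
    Tendsto (fun n => QQ (u n) i j x) atTop (𝓝 (QQ 0 i j x)) := by
  unfold QQ
  refine Tendsto.add ?_ ?_
  · split_ifs
    · exact tendsto_const_nhds.div ((tendsto_NN u hu x).pow 3) (pow_pos (NN_pos' hx) _).ne'
    · exact tendsto_const_nhds
  · exact tendsto_const_nhds.div ((tendsto_NN u hu x).pow 5) (pow_pos (NN_pos' hx) _).ne'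

lemma integrableOn_norm_sq_inv :
    IntegrableOn (fun x : E3 => (‖x‖ ^ 2)⁻¹) (ball 0 1) volume := by
  rw [integrableOn_fun_norm_addHaar volume (f := fun r => (r ^ 2)⁻¹)]
  have : IntegrableOn (fun _ : ℝ => (1:ℝ)) (Ioo 0 1) := by simp
  refine this.congr_fun ?_ measurableSet_Ioo
  intro y hy
  have := hy.1.ne'
  simp
  field_simp

lemma radial_deriv (r : ℝ) :
    HasDerivAt (fun r : ℝ => (r / √(r ^ 2 + 1)) ^ 3) (r ^ 2 * (3 / √(r ^ 2 + 1) ^ 5)) r := by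
  have h0 : 0 < r ^ 2 + 1 := by positivity
  have h1 : HasDerivAt (fun r : ℝ => r ^ 2 + 1) (2 * r) r := by
    simpa using (hasDerivAt_pow 2 r).add_const 1
  have h2 := h1.sqrt h0.ne'
  have hs : 0 < √(r ^ 2 + 1) := by positivity
  have h3 := ((hasDerivAt_id r).div h2 hs.ne').pow 3
  refine h3.congr_deriv ?_
  have hsq : √(r ^ 2 + 1) ^ 2 = r ^ 2 + 1 := Real.sq_sqrt h0.le
  simp only [id, Pi.div_apply, Nat.cast_ofNat, Nat.add_one_sub_one]
  generalize √(r ^ 2 + 1) = s at hs hsq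
  field_simp
  linear_combination r ^ 2 * hsq

open Filter Topology in
lemma radial_tendsto :
    Tendsto (fun r : ℝ => (r / √(r ^ 2 + 1)) ^ 3) atTop (𝓝 1) := by
  have h1 : Tendsto (fun r : ℝ => √(1 + (r⁻¹) ^ 2)) atTop (𝓝 1) := by
    have := ((tendsto_inv_atTop_zero (𝕜 := ℝ)).pow 2).const_add 1
    have := this.sqrt
    simpa using this
  have h2 : Tendsto (fun r : ℝ => ((√(1 + (r⁻¹) ^ 2))⁻¹) ^ 3) atTop (𝓝 1) := by
    simpa using (h1.inv₀ one_ne_zero).pow 3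
  refine h2.congr' ?_
  filter_upwards [eventually_gt_atTop 0] with r hr
  have : r ^ 2 + 1 = r ^ 2 * (1 + (r⁻¹) ^ 2) := by field_simp
  rw [this, Real.sqrt_mul (by positivity), Real.sqrt_sq hr.le]
  congr 1
  field_simp

lemma integrable_bump : Integrable (fun x : E3 => 3 / NN 1 x ^ 5) volume := by
  have h := integrable_fun_norm_addHaar (volume : Measure E3)
    (f := fun r => 3 / √(r ^ 2 + 1) ^ 5)
  have h2 := integrableOn_Ioi_deriv_of_nonneg' (a := 0) (fun x _ => radial_deriv x)
    (fun x _ => by positivity) radial_tendsto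
  simp only [NN, one_pow]
  rw [h]
  simpa using h2

lemma integral_bump : ∫ x : E3, 3 / NN 1 x ^ 5 = 4 * Real.pi := by
  have h := integral_fun_norm_addHaar (volume : Measure E3)
    (f := fun r => 3 / √(r ^ 2 + 1) ^ 5)
  have h2 := integral_Ioi_of_hasDerivAt_of_nonneg' (a := 0) (fun x _ => radial_deriv x)
    (fun x _ => by positivity) radial_tendsto
  simp only [NN, one_pow]
  rw [h]
  simp only [finrank_euclideanSpace, Fintype.card_fin, smul_eq_mul, Nat.add_one_sub_one]
  rw [h2, measureReal_def, EuclideanSpace.volume_ball_fin_three]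
  have hp : 0 ≤ Real.pi * 4 / 3 := by positivity
  simp [hp]
  ring

open Filter Topology in
lemma tendsto_delta (φ : E3 → ℝ) (hφ : Continuous φ) (hφc : HasCompactSupport φ)
    (u : ℕ → ℝ) (hu : Tendsto u atTop (𝓝 0)) (hu0 : ∀ n, 0 < u n) :
    Tendsto (fun n => ∫ x, φ x * (-3 * u n ^ 2 / NN (u n) x ^ 5)) atTop
      (𝓝 (-(4 * Real.pi * φ 0))) := by
  have key : ∀ n, ∫ x, φ x * (-3 * u n ^ 2 / NN (u n) x ^ 5)
      = ∫ y, -(φ (u n • y) * (3 / NN 1 y ^ 5)) := by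
    intro n
    have hn := hu0 n
    have h := Measure.integral_comp_smul_of_nonneg (volume : Measure E3)
      (fun x => φ x * (-3 * u n ^ 2 / NN (u n) x ^ 5)) (u n) (hR := hn.le)
    have h2 : ∫ x, φ x * (-3 * u n ^ 2 / NN (u n) x ^ 5) =
        u n ^ 3 * ∫ y, φ (u n • y) * (-3 * u n ^ 2 / NN (u n) (u n • y) ^ 5) := by
      rw [h, finrank_euclideanSpace, Fintype.card_fin, smul_eq_mul, ← mul_assoc,
        mul_inv_cancel₀ (by positivity), one_mul]
    rw [h2, ← integral_const_mul]
    congr 1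
    ext y
    have h3 : NN (u n) (u n • y) = u n * NN 1 y := by
      unfold NN
      rw [norm_smul, Real.norm_of_nonneg hn.le,
        show (u n * ‖y‖) ^ 2 + u n ^ 2 = u n ^ 2 * (‖y‖ ^ 2 + 1 ^ 2) by ring,
        Real.sqrt_mul (by positivity), Real.sqrt_sq hn.le]
    have h4 := NN_pos one_pos y
    rw [h3]
    field_simp
  simp only [key]
  obtain ⟨C, hC⟩ := hφc.exists_bound_of_continuous hφ
  have hlim : -(4 * Real.pi * φ 0) = ∫ y : E3, -(φ 0 * (3 / NN 1 y ^ 5)) := by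
    rw [integral_neg, integral_const_mul, integral_bump]; ring
  rw [hlim]
  refine tendsto_integral_of_dominated_convergence (fun y => C * (3 / NN 1 y ^ 5)) ?_
    (integrable_bump.const_mul C) ?_ ?_
  · intro n
    refine Continuous.aestronglyMeasurable ?_
    have := continuous_NN 1
    refine ((hφ.comp (by fun_prop)).mul (Continuous.div (by fun_prop) (by fun_prop)
      (fun x => (pow_pos (NN_pos one_pos x) _).ne'))).neg
  · intro n
    refine Eventually.of_forall fun y => ?_
    have h4 := NN_pos one_pos y
    rw [norm_neg, norm_mul, Real.norm_of_nonneg (by positivity : 0 ≤ 3 / NN 1 y ^ 5)]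
    gcongr
    exact hC _
  · refine Eventually.of_forall fun y => ?_
    have h5 : Tendsto (fun n => φ (u n • y)) atTop (𝓝 (φ 0)) := by
      have : Tendsto (fun n => u n • y) atTop (𝓝 ((0:ℝ) • y)) := hu.smul_const y
      rw [zero_smul] at this
      exact (hφ.tendsto 0).comp this
    exact (h5.mul_const _).neg


lemma cont_mul {ψ h : E3 → ℝ} (hψ : Continuous ψ) (hs : tsupport ψ ⊆ ball (0 : E3) 1)
    (hh : ContinuousOn h (ball (0 : E3) 1)) : Continuous (fun x => ψ x * h x) := by
  refine continuous_of_tsupport fun x hx => ?_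
  have hx1 : x ∈ ball (0 : E3) 1 := hs (tsupport_mul_subset_left hx)
  exact hψ.continuousAt.mul (hh.continuousAt (isOpen_ball.mem_nhds hx1))

lemma hasFDerivAt_mul_cutoff {φ b : E3 → ℝ} (hφ : Differentiable ℝ φ)
    (hs : tsupport φ ⊆ ball (0 : E3) 1) (hb : DifferentiableOn ℝ b (ball (0 : E3) 1)) (x : E3) :
    HasFDerivAt (fun x => φ x * b x) (φ x • fderiv ℝ b x + b x • fderiv ℝ φ x) x := by
  by_cases hx : x ∈ ball (0 : E3) 1
  · exact (hφ x).hasFDerivAt.mul ((hb.differentiableAt (isOpen_ball.mem_nhds hx)).hasFDerivAt)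
  · have hx' : x ∉ tsupport φ := fun h => hx (hs h)
    have h0 := notMem_tsupport_iff_eventuallyEq.1 hx'
    have h1 : φ x = 0 := h0.eq_of_nhds
    have h2 : fderiv ℝ φ x = 0 := by
      rw [h0.fderiv_eq]; simp
    rw [h1, h2]
    simp only [zero_smul, smul_zero, add_zero]
    have h3 : (fun x => φ x * b x) =ᶠ[nhds x] fun _ => (0:ℝ) := by
      filter_upwards [h0] with y hy
      simp [hy]
    exact (hasFDerivAt_const (0:ℝ) x).congr_of_eventuallyEq h3

lemma ae_ne_zero : ∀ᵐ x : E3, x ≠ 0 := by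
  rw [ae_iff]; simp

open Filter Topology in
lemma dct (G : ℝ → E3 → ℝ) (K : ℝ) (hcont : ∀ c, 0 < c → Continuous (G c))
    (hbd : ∀ c x, x ≠ 0 → |G c x| ≤ K * (‖x‖ ^ 2)⁻¹)
    (hout : ∀ c x, x ∉ ball (0 : E3) 1 → G c x = 0)
    (u : ℕ → ℝ) (hu0 : ∀ n, 0 < u n)
    (hlim : ∀ x, x ≠ 0 → Tendsto (fun n => G (u n) x) atTop (𝓝 (G 0 x))) :
    Integrable (G 0) ∧ Tendsto (fun n => ∫ x, G (u n) x) atTop (𝓝 (∫ x, G 0 x)) := by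
  let g : E3 → ℝ := (ball (0 : E3) 1).indicator (fun x => K * (‖x‖ ^ 2)⁻¹)
  have hg : Integrable g :=
    (integrable_indicator_iff measurableSet_ball).2 (integrableOn_norm_sq_inv.const_mul K)
  have hG : ∀ c, ∀ᵐ x, ‖G c x‖ ≤ g x := by
    intro c
    filter_upwards [ae_ne_zero] with x hx
    by_cases h : x ∈ ball (0 : E3) 1
    · simp only [g, indicator_of_mem h]; exact hbd c x hx
    · simp only [g, indicator_of_notMem h, hout c x h]; simp
  have hl : ∀ᵐ x, Tendsto (fun n => G (u n) x) atTop (𝓝 (G 0 x)) := by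
    filter_upwards [ae_ne_zero] with x hx using hlim x hx
  have hm : ∀ n, AEStronglyMeasurable (G (u n)) volume := fun n =>
    (hcont _ (hu0 n)).aestronglyMeasurable
  exact ⟨hg.mono' (aestronglyMeasurable_of_tendsto_ae atTop hm hl) (hG 0),
    tendsto_integral_of_dominated_convergence g hm hg (fun n => hG _) hl⟩

lemma coeff_bound {b : E3 → ℝ} (hb : ContDiffOn ℝ 2 b (ball (0 : E3) 1))
    (hD : fderiv ℝ b 0 = 0) {R : ℝ} (hR : R < 1) :
    ∃ K : ℝ, 0 ≤ K ∧ ∀ x ∈ closedBall (0 : E3) R,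
      ‖fderiv ℝ b x‖ ≤ K * ‖x‖ ∧ |b x - b 0| ≤ K * ‖x‖ ^ 2 := by
  have hsub : closedBall (0 : E3) R ⊆ ball 0 1 := closedBall_subset_ball hR
  have h1 : ContDiffOn ℝ 1 (fderiv ℝ b) (ball (0 : E3) 1) :=
    hb.fderiv_of_isOpen isOpen_ball (by norm_num)
  obtain ⟨K, hK⟩ := (h1.mono hsub).exists_lipschitzOnWith one_ne_zero
    (convex_closedBall _ _) (isCompact_closedBall _ _)
  have hA : ∀ x ∈ closedBall (0 : E3) R, ‖fderiv ℝ b x‖ ≤ K * ‖x‖ := by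
    intro x hx
    have hR0 : (0 : E3) ∈ closedBall (0 : E3) R := by
      rw [mem_closedBall, dist_zero_right] at hx
      exact mem_closedBall_self ((norm_nonneg x).trans hx)
    have := hK.dist_le_mul x hx 0 hR0
    rwa [hD, dist_zero_right, dist_zero_right] at this
  refine ⟨K, K.2, fun x hx => ⟨hA x hx, ?_⟩⟩
  have hx' : ‖x‖ ≤ R := by simpa using hx
  have hsub2 : closedBall (0 : E3) ‖x‖ ⊆ closedBall 0 R := closedBall_subset_closedBall hx'
  have := (convex_closedBall (0 : E3) ‖x‖).norm_image_sub_le_of_norm_fderiv_le (𝕜 := ℝ) (f := b)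
    (C := K * ‖x‖) (x := 0) (y := x)
    (fun y hy => (hb.differentiableOn (by norm_num)).differentiableAt
      (isOpen_ball.mem_nhds (hsub (hsub2 hy))))
    (fun y hy => (hA y (hsub2 hy)).trans (by
      have : ‖y‖ ≤ ‖x‖ := by simpa using hy
      gcongr))
    (mem_closedBall_self (norm_nonneg x)) (by simp)
  rw [sub_zero, Real.norm_eq_abs] at this
  calc _ ≤ _ := this
    _ = _ := by ring

/-- Flux integrand. -/
def FF (b φ : E3 → ℝ) (i j : Fin 3) (c : ℝ) (x : E3) : ℝ :=
  b x * fderiv ℝ φ x (EuclideanSpace.single i 1) * PP c j x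

/-- Source integrand. -/
def HH (b φ : E3 → ℝ) (d : ℝ) (i j : Fin 3) (c : ℝ) (x : E3) : ℝ :=
  φ x * (fderiv ℝ b x (EuclideanSpace.single i 1) * PP c j x + (b x - d) * QQ c i j x)

lemma tsupport_dir {φ : E3 → ℝ}
    (hφs : tsupport φ ⊆ ball (0 : E3) 1)
    (v : E3) : tsupport (fun x => fderiv ℝ φ x v) ⊆ ball (0 : E3) 1 := by
  refine (tsupport_fderiv_apply_subset ℝ v).trans hφs

lemma cont_dir {φ : E3 → ℝ}
    (hφ : ContDiff ℝ (⊤ : ℕ∞) φ)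
    (v : E3) : Continuous (fun x => fderiv ℝ φ x v) :=
  (hφ.continuous_fderiv (by simp)).clm_apply continuous_const

lemma cont_db {b : E3 → ℝ}
    (hb : ContDiffOn ℝ 2 b (ball (0 : E3) 1))
    (v : E3) : ContinuousOn (fun x => fderiv ℝ b x v) (ball (0 : E3) 1) :=
  (hb.continuousOn_fderiv_of_isOpen isOpen_ball (by norm_num)).clm_apply continuousOn_const

lemma cont_bdφ {b φ : E3 → ℝ}
    (hb : ContDiffOn ℝ 2 b (ball (0 : E3) 1))
    (hφ : ContDiff ℝ (⊤ : ℕ∞) φ)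
    (hφs : tsupport φ ⊆ ball (0 : E3) 1)
    (i : Fin 3) :
    Continuous (fun x => b x * fderiv ℝ φ x (EuclideanSpace.single i 1)) := by
  simpa only [mul_comm] using
    cont_mul (cont_dir hφ (EuclideanSpace.single i 1)) (tsupport_dir hφs _) hb.continuousOn

lemma cont_FF {b φ : E3 → ℝ}
    (hb : ContDiffOn ℝ 2 b (ball (0 : E3) 1))
    (hφ : ContDiff ℝ (⊤ : ℕ∞) φ)
    (hφs : tsupport φ ⊆ ball (0 : E3) 1)
    (i j : Fin 3) {c : ℝ} (hc : 0 < c) : Continuous (FF b φ i j c) :=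
  (cont_bdφ hb hφ hφs i).mul (continuous_PP hc j)

lemma cont_HH {b φ : E3 → ℝ}
    (hb : ContDiffOn ℝ 2 b (ball (0 : E3) 1))
    (hφ : ContDiff ℝ (⊤ : ℕ∞) φ)
    (hφs : tsupport φ ⊆ ball (0 : E3) 1)
    (d : ℝ) (i j : Fin 3) {c : ℝ} (hc : 0 < c) : Continuous (HH b φ d i j c) := by
  unfold HH
  exact cont_mul hφ.continuous hφs (((cont_db hb _).mul (continuous_PP hc j).continuousOn).add
    ((hb.continuousOn.sub continuousOn_const).mul (continuous_QQ hc i j).continuousOn))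

lemma φ_out {φ : E3 → ℝ}
    (hφs : tsupport φ ⊆ ball (0 : E3) 1)
    {x : E3} (hx : x ∉ ball (0 : E3) 1) : φ x = 0 :=
  image_eq_zero_of_notMem_tsupport fun h => hx (hφs h)

lemma dφ_out {φ : E3 → ℝ}
    (hφs : tsupport φ ⊆ ball (0 : E3) 1)
    (v : E3) {x : E3} (hx : x ∉ ball (0 : E3) 1) : fderiv ℝ φ x v = 0 :=
  φ_out (tsupport_dir hφs v) hx

lemma FF_out {b φ : E3 → ℝ}
    (hφs : tsupport φ ⊆ ball (0 : E3) 1)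
    (i j : Fin 3) (c : ℝ) (x : E3) (hx : x ∉ ball (0 : E3) 1) : FF b φ i j c x = 0 := by
  simp [FF, dφ_out hφs _ hx]

lemma HH_out {b φ : E3 → ℝ}
    (hφs : tsupport φ ⊆ ball (0 : E3) 1)
    (d : ℝ) (i j : Fin 3) (c : ℝ) (x : E3) (hx : x ∉ ball (0 : E3) 1) :
    HH b φ d i j c x = 0 := by
  simp [HH, φ_out hφs hx]

lemma dφ_cs {φ : E3 → ℝ}
    (hφc : HasCompactSupport φ)
    (v : E3) : HasCompactSupport (fun x => fderiv ℝ φ x v) :=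
  hφc.fderiv_apply ℝ v

open Filter Topology in
lemma FF_lim {b φ : E3 → ℝ}
    (hb : ContDiffOn ℝ 2 b (ball (0 : E3) 1))
    (hφ : ContDiff ℝ (⊤ : ℕ∞) φ)
    (hφc : HasCompactSupport φ)
    (hφs : tsupport φ ⊆ ball (0 : E3) 1)
    (i j : Fin 3) (u : ℕ → ℝ) (hu : Tendsto u atTop (𝓝 0)) (hu0 : ∀ n, 0 < u n) :
    Integrable (FF b φ i j 0) ∧
      Tendsto (fun n => ∫ x, FF b φ i j (u n) x) atTop (𝓝 (∫ x, FF b φ i j 0 x)) := by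
  obtain ⟨C, hC⟩ := HasCompactSupport.exists_bound_of_continuous
    (f := fun x => b x * fderiv ℝ φ x (EuclideanSpace.single i 1))
    ((dφ_cs hφc (EuclideanSpace.single i 1)).mul_left) (cont_bdφ hb hφ hφs i)
  have hC0 : 0 ≤ C := (norm_nonneg _).trans (hC 0)
  refine dct (FF b φ i j) C (fun c hc => cont_FF hb hφ hφs i j hc) ?_
    (FF_out hφs i j) u hu0 ?_
  · intro c x hx
    unfold FF
    rw [abs_mul]
    exact mul_le_mul (hC x) (abs_PP_le c j hx) (abs_nonneg _) hC0
  · intro x hx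
    exact (tendsto_PP u hu hx j).const_mul _

open Filter Topology in
lemma HH_lim {b φ : E3 → ℝ}
    (hb : ContDiffOn ℝ 2 b (ball (0 : E3) 1))
    (hφ : ContDiff ℝ (⊤ : ℕ∞) φ)
    (hφc : HasCompactSupport φ)
    (hφs : tsupport φ ⊆ ball (0 : E3) 1)
    (hD : fderiv ℝ b 0 = 0)
    (i j : Fin 3) (u : ℕ → ℝ) (hu : Tendsto u atTop (𝓝 0)) (hu0 : ∀ n, 0 < u n) :
    Integrable (HH b φ (b 0) i j 0) ∧
      Tendsto (fun n => ∫ x, HH b φ (b 0) i j (u n) x) atTop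
        (𝓝 (∫ x, HH b φ (b 0) i j 0 x)) := by
  obtain ⟨C, hC⟩ := hφc.exists_bound_of_continuous hφ.continuous
  have hC0 : 0 ≤ C := (norm_nonneg _).trans (hC 0)
  obtain ⟨R, hR, hRs⟩ := exists_lt_subset_ball (isClosed_tsupport φ) hφs
  obtain ⟨K, hK0, hK⟩ := coeff_bound hb hD hR
  refine dct (HH b φ (b 0) i j) (C * (5 * K)) (fun c hc => cont_HH hb hφ hφs (b 0) i j hc) ?_
    (HH_out hφs (b 0) i j) u hu0 ?_
  · intro c x hx
    unfold HH
    have hp := norm_pos_iff.2 hx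
    by_cases hxs : x ∈ tsupport φ
    · obtain ⟨h1, h2⟩ := hK x (ball_subset_closedBall (hRs hxs))
      have hx1 : ‖x‖ ≤ 1 := by
        have := hφs hxs
        rw [mem_ball, dist_zero_right] at this
        exact this.le
      have h3 : |fderiv ℝ b x (EuclideanSpace.single i 1)| ≤ K * ‖x‖ := by
        have := (fderiv ℝ b x).le_opNorm (EuclideanSpace.single i 1)
        rw [PiLp.norm_single, norm_one, mul_one] at this
        exact this.trans h1
      rw [abs_mul, mul_assoc]
      refine mul_le_mul (hC x) ?_ (abs_nonneg _) hC0
      calc _ ≤ _ := abs_add_le _ _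
        _ ≤ K * ‖x‖ * (‖x‖ ^ 2)⁻¹ + K * ‖x‖ ^ 2 * (4 * (‖x‖ ^ 3)⁻¹) := by
          rw [abs_mul, abs_mul]
          gcongr
          · exact abs_PP_le c j hx
          · exact abs_QQ_le c i j hx
        _ = 5 * K * (‖x‖ ^ 2)⁻¹ * ‖x‖ := by field_simp; ring
        _ ≤ 5 * K * (‖x‖ ^ 2)⁻¹ * 1 := by gcongr
        _ = _ := by ring
    · rw [image_eq_zero_of_notMem_tsupport hxs]
      simp only [zero_mul, abs_zero]
      positivity
  · intro x hx
    exact (((tendsto_PP u hu hx j).const_mul _).add ((tendsto_QQ u hu hx i j).const_mul _)).const_mul _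

lemma int_FF {b φ : E3 → ℝ}
    (hb : ContDiffOn ℝ 2 b (ball (0 : E3) 1))
    (hφ : ContDiff ℝ (⊤ : ℕ∞) φ)
    (hφc : HasCompactSupport φ)
    (hφs : tsupport φ ⊆ ball (0 : E3) 1)
    (i j : Fin 3) {c : ℝ} (hc : 0 < c) : Integrable (FF b φ i j c) := by
  refine (cont_FF hb hφ hφs i j hc).integrable_of_hasCompactSupport ?_
  exact ((dφ_cs hφc (EuclideanSpace.single i 1)).mul_left).mul_right

lemma int_HH {b φ : E3 → ℝ}
    (hb : ContDiffOn ℝ 2 b (ball (0 : E3) 1))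
    (hφ : ContDiff ℝ (⊤ : ℕ∞) φ)
    (hφc : HasCompactSupport φ)
    (hφs : tsupport φ ⊆ ball (0 : E3) 1)
    (d : ℝ) (i j : Fin 3) {c : ℝ} (hc : 0 < c) : Integrable (HH b φ d i j c) := by
  refine (cont_HH hb hφ hφs d i j hc).integrable_of_hasCompactSupport ?_
  exact hφc.mul_right

lemma int_TT {φ : E3 → ℝ}
    (hφ : ContDiff ℝ (⊤ : ℕ∞) φ)
    (hφc : HasCompactSupport φ)
    (d : ℝ) (i j : Fin 3) {c : ℝ} (hc : 0 < c) :
    Integrable (fun x => φ x * (d * QQ c i j x)) := by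
  refine (hφ.continuous.mul
    (continuous_const.mul (continuous_QQ hc i j))).integrable_of_hasCompactSupport ?_
  exact hφc.mul_right

lemma ibp {b φ : E3 → ℝ}
    (hb : ContDiffOn ℝ 2 b (ball (0 : E3) 1))
    (hφ : ContDiff ℝ (⊤ : ℕ∞) φ)
    (hφc : HasCompactSupport φ)
    (hφs : tsupport φ ⊆ ball (0 : E3) 1)
    (d : ℝ) (i j : Fin 3) {c : ℝ} (hc : 0 < c) :
    ∫ x, FF b φ i j c x = -(∫ x, HH b φ d i j c x) - ∫ x, φ x * (d * QQ c i j x) := by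
  have hw := hasFDerivAt_mul_cutoff (hφ.differentiable (by simp)) hφs
    (hb.differentiableOn (by norm_num))
  have hwc := cont_mul hφ.continuous hφs hb.continuousOn
  have hwd := cont_mul hφ.continuous hφs (cont_db hb (EuclideanSpace.single i 1))
  have hQ : ∀ x, fderiv ℝ (PP c j) x (EuclideanSpace.single i 1) = QQ c i j x :=
    fun x => fderiv_PP (NN_pos hc x) i j
  have hw' : ∀ x, fderiv ℝ (fun x => φ x * b x) x (EuclideanSpace.single i 1) =
      φ x * fderiv ℝ b x (EuclideanSpace.single i 1) +
        b x * fderiv ℝ φ x (EuclideanSpace.single i 1) := by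
    intro x; rw [(hw x).fderiv]; simp
  have I1 : Integrable fun x => φ x * fderiv ℝ b x (EuclideanSpace.single i 1) * PP c j x :=
    (hwd.mul (continuous_PP hc j)).integrable_of_hasCompactSupport (hφc.mul_right.mul_right)
  have IF := int_FF hb hφ hφc hφs i j hc
  have I2 : Integrable fun x => φ x * b x * QQ c i j x :=
    (hwc.mul (continuous_QQ hc i j)).integrable_of_hasCompactSupport (hφc.mul_right.mul_right)
  have I3 : Integrable fun x => φ x * b x * PP c j x :=
    (hwc.mul (continuous_PP hc j)).integrable_of_hasCompactSupport (hφc.mul_right.mul_right)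
  have e1 : (fun x => fderiv ℝ (fun x => φ x * b x) x (EuclideanSpace.single i 1) * PP c j x) =
      fun x => φ x * fderiv ℝ b x (EuclideanSpace.single i 1) * PP c j x + FF b φ i j c x := by
    ext x; rw [hw', FF]; ring
  have key := integral_mul_fderiv_eq_neg_fderiv_mul_of_integrable (μ := (volume : Measure E3))
    (f := fun x => φ x * b x) (g := PP c j) (v := EuclideanSpace.single i 1)
    (by rw [e1]; exact I1.add IF) (by simpa only [hQ] using I2) I3
    (fun x _ => (hw x).differentiableAt) (fun x _ => differentiableAt_PP (NN_pos hc x) j)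
  rw [e1, integral_add I1 IF] at key
  simp only [hQ] at key
  have e2 : ∫ x, HH b φ d i j c x = (∫ x, φ x * fderiv ℝ b x (EuclideanSpace.single i 1) * PP c j x)
      + (∫ x, φ x * b x * QQ c i j x) - ∫ x, φ x * (d * QQ c i j x) := by
    have h12 := integral_add I1 I2
    have h3 := integral_sub (I1.add I2) (int_TT hφ hφc d i j hc)
    simp only [Pi.add_apply] at h3
    rw [← h12, ← h3]
    congr 1; ext x; simp only [HH]; ring
  linarith

open Filter Topology

/-- With `a` as in Statement 9 (a `C²` symmetric matrix field on the unit
ball `B` with `a(0) = I` and `Da(0) = 0`) and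
`f(x) = Σ_{i,j} ∂_i(a^{ij}(x) ∂_j |x|⁻¹)`, for every test function `φ ∈ C_c^∞(B)` both
integrals converge absolutely and
`∫_B Σ_{i,j} a^{ij} ∂_iφ ∂_j(|x|⁻¹) dx = 4π φ(0) − ∫_B φ f dx`. -/
theorem stmt_10 (a : E3 → Fin 3 → Fin 3 → ℝ)
    (ha : ∀ i j, ContDiffOn ℝ 2 (fun y => a y i j) (ball (0 : E3) 1))
    (hsym : ∀ x ∈ ball (0 : E3) 1, ∀ i j, a x i j = a x j i)
    (ha0 : ∀ i j, a 0 i j = if i = j then (1 : ℝ) else 0)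
    (hDa0 : ∀ i j, fderiv ℝ (fun y => a y i j) 0 = 0)
    (φ : E3 → ℝ) (hφ : ContDiff ℝ (⊤ : ℕ∞) φ) (hφc : HasCompactSupport φ)
    (hφs : tsupport φ ⊆ ball (0 : E3) 1) :
    IntegrableOn (fun x => ∑ i, ∑ j, a x i j *
        fderiv ℝ φ x (EuclideanSpace.single i 1) *
        fderiv ℝ (fun z : E3 => ‖z‖⁻¹) x (EuclideanSpace.single j 1))
      (ball (0 : E3) 1) volume ∧
    IntegrableOn (fun x => φ x *
        ∑ i, ∑ j, fderiv ℝ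
          (fun y => a y i j * fderiv ℝ (fun z : E3 => ‖z‖⁻¹) y (EuclideanSpace.single j 1))
          x (EuclideanSpace.single i 1))
      (ball (0 : E3) 1) volume ∧
    ∫ x in ball (0 : E3) 1, (∑ i, ∑ j, a x i j *
        fderiv ℝ φ x (EuclideanSpace.single i 1) *
        fderiv ℝ (fun z : E3 => ‖z‖⁻¹) x (EuclideanSpace.single j 1)) =
      4 * Real.pi * φ 0 -
        ∫ x in ball (0 : E3) 1, (φ x *
          ∑ i, ∑ j, fderiv ℝ
            (fun y => a y i j * fderiv ℝ (fun z : E3 => ‖z‖⁻¹) y (EuclideanSpace.single j 1))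
            x (EuclideanSpace.single i 1)) := by
  have F_eq : ∀ x : E3, x ≠ 0 → (∑ i, ∑ j, a x i j *
        fderiv ℝ φ x (EuclideanSpace.single i 1) *
        fderiv ℝ (fun z : E3 => ‖z‖⁻¹) x (EuclideanSpace.single j 1)) =
      ∑ i, ∑ j, FF (fun y => a y i j) φ i j 0 x := by
    intro x hx
    simp only [FF, fderiv_norm_inv hx]
  have H_eq : ∀ x ∈ ball (0 : E3) 1, x ≠ 0 → (φ x *
        ∑ i, ∑ j, fderiv ℝ
          (fun y => a y i j * fderiv ℝ (fun z : E3 => ‖z‖⁻¹) y (EuclideanSpace.single j 1))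
          x (EuclideanSpace.single i 1)) =
      ∑ i, ∑ j, HH (fun y => a y i j) φ (a 0 i j) i j 0 x := by
    intro x hxb hx
    have h1 : ∀ i j, fderiv ℝ
          (fun y => a y i j * fderiv ℝ (fun z : E3 => ‖z‖⁻¹) y (EuclideanSpace.single j 1))
          x (EuclideanSpace.single i 1) =
        fderiv ℝ (fun y => a y i j) x (EuclideanSpace.single i 1) * PP 0 j x
          + a x i j * QQ 0 i j x := by
      intro i j
      have he : (fun y => a y i j *
          fderiv ℝ (fun z : E3 => ‖z‖⁻¹) y (EuclideanSpace.single j 1)) =ᶠ[nhds x]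
          fun y => a y i j * PP 0 j y := by
        filter_upwards [isOpen_ne.mem_nhds hx] with y hy
        rw [fderiv_norm_inv hy]
      have hd : DifferentiableAt ℝ (fun y => a y i j) x :=
        ((ha i j).differentiableOn (by norm_num)).differentiableAt (isOpen_ball.mem_nhds hxb)
      have hm := hd.hasFDerivAt.mul (differentiableAt_PP (NN_pos' (c := 0) hx) j).hasFDerivAt
      have hm' := hm.congr_of_eventuallyEq he
      rw [hm'.fderiv]
      simp only [_root_.add_apply, _root_.smul_apply, smul_eq_mul, fderiv_PP (NN_pos' (c := 0) hx)]
      ring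
    have h2 := sum_QQ (NN_pos' (c := 0) hx)
    have h3 : ∑ i, ∑ j, a 0 i j * QQ 0 i j x = 0 := by
      simp only [ha0, ite_mul, one_mul, zero_mul, Finset.sum_ite_eq, Finset.mem_univ, if_true]
      rw [h2]; simp
    have h4 : ∑ i, ∑ j, HH (fun y => a y i j) φ (a 0 i j) i j 0 x =
        φ x * (∑ i, ∑ j, (fderiv ℝ (fun y => a y i j) x (EuclideanSpace.single i 1) * PP 0 j x
          + a x i j * QQ 0 i j x) - ∑ i, ∑ j, a 0 i j * QQ 0 i j x) := by
      simp only [HH, ← Finset.sum_sub_distrib, Finset.mul_sum]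
      refine Finset.sum_congr rfl fun i _ => Finset.sum_congr rfl fun j _ => ?_
      ring
    rw [h4, h3, sub_zero]
    simp only [h1]
  let u : ℕ → ℝ := fun n => 1 / ((n : ℝ) + 1)
  have hu : Tendsto u atTop (𝓝 0) := tendsto_one_div_add_atTop_nhds_zero_nat
  have hu0 : ∀ n, 0 < u n := fun n => by positivity
  have hF := fun i j => FF_lim (ha i j) hφ hφc hφs i j u hu hu0
  have hH := fun i j => HH_lim (ha i j) hφ hφc hφs (hDa0 i j) i j u hu hu0
  have IF : Integrable fun x => ∑ i, ∑ j, FF (fun y => a y i j) φ i j 0 x :=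
    integrable_finsetSum _ fun i _ => integrable_finsetSum _ fun j _ => (hF i j).1
  have IH : Integrable fun x => ∑ i, ∑ j, HH (fun y => a y i j) φ (a 0 i j) i j 0 x :=
    integrable_finsetSum _ fun i _ => integrable_finsetSum _ fun j _ => (hH i j).1
  have aeF : ∀ᵐ x ∂(volume.restrict (ball (0 : E3) 1)),
      ∑ i, ∑ j, FF (fun y => a y i j) φ i j 0 x = (∑ i, ∑ j, a x i j *
        fderiv ℝ φ x (EuclideanSpace.single i 1) *
        fderiv ℝ (fun z : E3 => ‖z‖⁻¹) x (EuclideanSpace.single j 1)) := by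
    filter_upwards [ae_restrict_of_ae ae_ne_zero] with x hx using (F_eq x hx).symm
  have aeH : ∀ᵐ x ∂(volume.restrict (ball (0 : E3) 1)),
      ∑ i, ∑ j, HH (fun y => a y i j) φ (a 0 i j) i j 0 x = (φ x *
        ∑ i, ∑ j, fderiv ℝ
          (fun y => a y i j * fderiv ℝ (fun z : E3 => ‖z‖⁻¹) y (EuclideanSpace.single j 1))
          x (EuclideanSpace.single i 1)) := by
    filter_upwards [ae_restrict_of_ae ae_ne_zero, ae_restrict_mem measurableSet_ball]
      with x hx hxb using (H_eq x hxb hx).symm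
  refine ⟨IF.integrableOn.congr aeF, IH.integrableOn.congr aeH, ?_⟩
  rw [← integral_congr_ae aeF, ← integral_congr_ae aeH,
    setIntegral_eq_integral_of_forall_compl_eq_zero (fun x hx => by simp [FF_out hφs _ _ _ x hx]),
    setIntegral_eq_integral_of_forall_compl_eq_zero (fun x hx => by simp [HH_out hφs _ _ _ _ x hx])]
  have sF : ∫ x, ∑ i, ∑ j, FF (fun y => a y i j) φ i j 0 x =
      ∑ i, ∑ j, ∫ x, FF (fun y => a y i j) φ i j 0 x := by
    rw [integral_finsetSum _ fun i _ => integrable_finsetSum _ fun j _ => (hF i j).1]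
    exact Finset.sum_congr rfl fun i _ => integral_finsetSum _ fun j _ => (hF i j).1
  have sH : ∫ x, ∑ i, ∑ j, HH (fun y => a y i j) φ (a 0 i j) i j 0 x =
      ∑ i, ∑ j, ∫ x, HH (fun y => a y i j) φ (a 0 i j) i j 0 x := by
    rw [integral_finsetSum _ fun i _ => integrable_finsetSum _ fun j _ => (hH i j).1]
    exact Finset.sum_congr rfl fun i _ => integral_finsetSum _ fun j _ => (hH i j).1
  rw [sF, sH]
  have lF : Tendsto (fun n => ∑ i, ∑ j, ∫ x, FF (fun y => a y i j) φ i j (u n) x) atTop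
      (𝓝 (∑ i, ∑ j, ∫ x, FF (fun y => a y i j) φ i j 0 x)) :=
    tendsto_finsetSum _ fun i _ => tendsto_finsetSum _ fun j _ => (hF i j).2
  have lH : Tendsto (fun n => ∑ i, ∑ j, ∫ x, HH (fun y => a y i j) φ (a 0 i j) i j (u n) x) atTop
      (𝓝 (∑ i, ∑ j, ∫ x, HH (fun y => a y i j) φ (a 0 i j) i j 0 x)) :=
    tendsto_finsetSum _ fun i _ => tendsto_finsetSum _ fun j _ => (hH i j).2
  have lT := tendsto_delta φ hφ.continuous hφc u hu hu0
  have eq : ∀ n, ∑ i, ∑ j, ∫ x, FF (fun y => a y i j) φ i j (u n) x =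
      -(∑ i, ∑ j, ∫ x, HH (fun y => a y i j) φ (a 0 i j) i j (u n) x)
        - ∫ x, φ x * (-3 * u n ^ 2 / NN (u n) x ^ 5) := by
    intro n
    have e1 : ∫ x, φ x * (-3 * u n ^ 2 / NN (u n) x ^ 5) =
        ∑ i, ∑ j, ∫ x, φ x * (a 0 i j * QQ (u n) i j x) := by
      have e2 : ∀ x, φ x * (-3 * u n ^ 2 / NN (u n) x ^ 5) =
          ∑ i, ∑ j, φ x * (a 0 i j * QQ (u n) i j x) := by
        intro x
        rw [← sum_QQ (NN_pos (hu0 n) x)]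
        simp only [← Finset.mul_sum, ha0, ite_mul, one_mul, zero_mul, Finset.sum_ite_eq,
          Finset.mem_univ, if_true]
      simp only [e2]
      have IT := fun i j => int_TT hφ hφc (a 0 i j) i j (hu0 n)
      rw [integral_finsetSum _ fun i _ => integrable_finsetSum _ fun j _ => IT i j]
      exact Finset.sum_congr rfl fun i _ => integral_finsetSum _ fun j _ => IT i j
    rw [e1, ← Finset.sum_neg_distrib, ← Finset.sum_sub_distrib]
    refine Finset.sum_congr rfl fun i _ => ?_
    rw [← Finset.sum_neg_distrib, ← Finset.sum_sub_distrib]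
    exact Finset.sum_congr rfl fun j _ => ibp (ha i j) hφ hφc hφs (a 0 i j) i j (hu0 n)
  have lR := lH.neg.sub lT
  have := tendsto_nhds_unique lF (lR.congr fun n => (eq n).symm)
  rw [this]; ring
end
end

section
/- Fix τ ∈ (0, 1), constants 0 < λ ≤ Λ, and K, M > 0. There exist C > 0 and r₁ ∈ (0, 1), depending only on τ, λ, Λ, K, M, with the following property. Let B be the open unit ball in ℝ³ and let a = (a^{ij}) : B → (real symmetric 3×3 matrices) be C² with C²-norm at most M and with λ|ξ|² ≤ ⟨a(x)ξ, ξ⟩ ≤ Λ|ξ|² for all x ∈ B, ξ ∈ ℝ³. Let e : B → ℝ be continuous on B and C² on B ∖ {0}, and let f : B ∖ {0} → ℝ be C¹ with |f(x)| ≤ K |x|^{-1} and |∇f(x)| ≤ K |x|^{-2} on B ∖ {0}. Assume that Σ_{i,j} ∂_i ( a^{ij}(x) ∂_j e(x) ) = f(x) for all x ∈ B ∖ {0}, and that |e(x) − e(0)| ≤ K |x|^{1−τ} for all x ∈ B. Then |∇e(x)| ≤ C |x|^{−τ} and |∇² e(x)| ≤ C |x|^{−1−τ} for all 0 < |x| ≤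 r₁. -/
open Metric Set
open scoped BigOperators

noncomputable section

open MeasureTheory Filter Topology
open scoped ContDiff

/-- directional derivative -/
def dd (v : E3) (h : E3 → ℝ) : E3 → ℝ := fun x => fderiv ℝ h x v

/-- standard basis vectors -/
def bv (i : Fin 3) : E3 := EuclideanSpace.single i 1

lemma norm_bv (i : Fin 3) : ‖bv i‖ = 1 := by simp [bv]

lemma bv_sum (y : E3) : y = ∑ i, y i • bv i := by
  ext j; fin_cases j <;> simp [bv, Fin.sum_univ_three]

lemma dd_contDiff {n m : ℕ∞ω} {h : E3 → ℝ} (v : E3) (hh : ContDiff ℝ n h) (hmn : m + 1 ≤ n) :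
    ContDiff ℝ m (dd v h) := (hh.fderiv_right hmn).clm_apply contDiff_const

lemma dd_smooth {h : E3 → ℝ} (v : E3) (hh : ContDiff ℝ ∞ h) : ContDiff ℝ ∞ (dd v h) :=
  dd_contDiff v hh (by simp)

lemma dd_dd {h : E3 → ℝ} (hh : ContDiff ℝ 2 h) (v w : E3) (x : E3) :
    dd v (dd w h) x = fderiv ℝ (fderiv ℝ h) x v w := by
  have h1 : DifferentiableAt ℝ (fderiv ℝ h) x :=
    (hh.fderiv_right (m := 1) (by norm_num)).differentiable (by norm_num) x
  unfold dd
  rw [fderiv_clm_apply h1 (differentiableAt_const _)]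
  simp

lemma dd_comm {h : E3 → ℝ} (hh : ContDiff ℝ 2 h) (v w : E3) :
    dd v (dd w h) = dd w (dd v h) := by
  ext x
  rw [dd_dd hh, dd_dd hh]
  have := (hh.contDiffAt (x := x)).isSymmSndFDerivAt (by simp)
  exact this v w

lemma dd_compact {h : E3 → ℝ} (v : E3) (hh : HasCompactSupport h) : HasCompactSupport (dd v h) :=
  hh.fderiv_apply ℝ v

lemma dd_tsupport {h : E3 → ℝ} (v : E3) : tsupport (dd v h) ⊆ tsupport h :=
  tsupport_fderiv_apply_subset ℝ v

lemma ibp_s11 {h g : E3 → ℝ} (v : E3) (hh : ContDiff ℝ 1 h) (hg : ContDiff ℝ 1 g)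
    (hc : HasCompactSupport h) :
    ∫ x, h x * dd v g x = - ∫ x, dd v h x * g x := by
  have c1 : Continuous (dd v h) := (dd_contDiff (m := 0) v hh (by norm_num)).continuous
  have c2 : Continuous (dd v g) := (dd_contDiff (m := 0) v hg (by norm_num)).continuous
  refine integral_mul_fderiv_eq_neg_fderiv_mul_of_integrable ?_ ?_ ?_
    (fun x _ => hh.differentiable (by norm_num) x) (fun x _ => hg.differentiable (by norm_num) x)
  · exact (c1.mul hg.continuous).integrable_of_hasCompactSupport (dd_compact v hc).mul_right
  · exact (hh.continuous.mul c2).integrable_of_hasCompactSupport hc.mul_right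
  · exact (hh.continuous.mul hg.continuous).integrable_of_hasCompactSupport hc.mul_right

/-- divergence of the field `y ↦ h y • y` -/
def Vop (h : E3 → ℝ) : E3 → ℝ := fun y => fderiv ℝ h y y + 3 * h y

lemma dd_Vop {h : E3 → ℝ} (hh : ContDiff ℝ 2 h) (v : E3) (y : E3) :
    dd v (Vop h) y = Vop (dd v h) y + dd v h y := by
  have h0 : DifferentiableAt ℝ h y := hh.differentiable (by norm_num) y
  have h1 : DifferentiableAt ℝ (fderiv ℝ h) y :=
    (hh.fderiv_right (m := 1) (by norm_num)).differentiable (by norm_num) y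
  have e1 : HasFDerivAt (Vop h) _ y :=
    ((h1.hasFDerivAt.clm_apply (hasFDerivAt_id y)).add (h0.hasFDerivAt.const_mul 3))
  have e2 := (hh.contDiffAt (x := y)).isSymmSndFDerivAt (by simp) v y
  have e3 := dd_dd hh y v y
  unfold dd at e3
  unfold dd
  rw [e1.fderiv]
  simp only [Vop]
  rw [e3]
  simp
  rw [e2]; ring

lemma Vop_eq {h : E3 → ℝ} (hh : ContDiff ℝ 1 h) (y : E3) :
    Vop h y = ∑ i, dd (bv i) (fun z => z i * h z) y := by
  have h0 : DifferentiableAt ℝ h y := hh.differentiable (by norm_num) y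
  have key : ∀ i, dd (bv i) (fun z => z i * h z) y = y i * dd (bv i) h y + h y := by
    intro i
    have e1 : HasFDerivAt (fun z : E3 => z i) (EuclideanSpace.proj i : E3 →L[ℝ] ℝ) y :=
      (EuclideanSpace.proj i : E3 →L[ℝ] ℝ).hasFDerivAt
    have : HasFDerivAt (fun z : E3 => z i * h z) _ y := e1.mul h0.hasFDerivAt
    unfold dd
    rw [this.fderiv]
    simp [bv]
  simp only [key]
  rw [Finset.sum_add_distrib]
  have : fderiv ℝ h y y = ∑ i, y i * dd (bv i) h y := by
    conv_lhs => arg 2; rw [bv_sum y]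
    simp only [map_sum, map_smul, smul_eq_mul, dd]
  simp [Vop, this]

lemma ibp_V {h g : E3 → ℝ} (hh : ContDiff ℝ 1 h) (hg : ContDiff ℝ 1 g)
    (hc : HasCompactSupport h) :
    ∫ y, h y * fderiv ℝ g y y = - ∫ y, Vop h y * g y := by
  have hcoord : ∀ i, ContDiff ℝ 1 (fun z : E3 => z i * h z) := fun i =>
    ((EuclideanSpace.proj i : E3 →L[ℝ] ℝ).contDiff).mul hh
  have e1 : ∀ y, h y * fderiv ℝ g y y = ∑ i, (y i * h y) * dd (bv i) g y := by
    intro y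
    conv_lhs => arg 2; arg 2; rw [bv_sum y]
    simp only [map_sum, map_smul, smul_eq_mul, dd, Finset.mul_sum]
    refine Finset.sum_congr rfl fun i _ => by ring
  simp only [e1, Vop_eq hh, Finset.sum_mul]
  have cs : ∀ i, HasCompactSupport (fun z : E3 => z i * h z) := fun i => hc.mul_left
  rw [integral_finsetSum, integral_finsetSum, ← Finset.sum_neg_distrib]
  · exact Finset.sum_congr rfl fun i _ => ibp_s11 (bv i) (hcoord i) hg (cs i)
  · intro i _
    exact ((dd_contDiff (m := 0) _ (hcoord i) (by norm_num)).continuous.mul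
      hg.continuous).integrable_of_hasCompactSupport (dd_compact _ (cs i)).mul_right
  · intro i _
    exact ((hcoord i).continuous.mul (dd_contDiff (m := 0) _ hg
      (by norm_num)).continuous).integrable_of_hasCompactSupport (cs i).mul_right


lemma exists_prof : ∃ Ψ θ : ℝ → ℝ, ContDiff ℝ ∞ Ψ ∧ ContDiff ℝ ∞ θ ∧
    (∀ s, HasDerivAt Ψ (θ s / 2) s) ∧ (∀ s, 2 ≤ s → Ψ s = 0) ∧ (∀ s, 2 ≤ s → θ s = 0) ∧
    (∀ s, 0 ≤ θ s) ∧ ∀ s, |s| ≤ 1 → θ s = 1 := by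
  let θ : ContDiffBump (0 : ℝ) := ⟨1, 2, by norm_num, by norm_num⟩
  have hθ : ContDiff ℝ ∞ (fun s => θ s / 2) := θ.contDiff.div_const 2
  have hz : ∀ s, 2 ≤ s → θ s = 0 := fun s hs =>
    θ.zero_of_le_dist (by simpa [θ] using hs.trans (le_abs_self s))
  have hd : ∀ s, HasDerivAt (fun s => ∫ x in (2:ℝ)..s, θ x / 2) (θ s / 2) s := fun s =>
    intervalIntegral.integral_hasDerivAt_right (hθ.continuous.intervalIntegrable _ _)
      (hθ.continuous.stronglyMeasurableAtFilter _ _) hθ.continuous.continuousAt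
  refine ⟨fun s => ∫ x in (2:ℝ)..s, θ x / 2, θ, ?_, θ.contDiff, hd, ?_, hz, fun s => θ.nonneg, ?_⟩
  · rw [contDiff_infty_iff_deriv]
    refine ⟨fun s => (hd s).differentiableAt, ?_⟩
    rw [show deriv (fun s => ∫ x in (2:ℝ)..s, θ x / 2) = fun s => θ s / 2 from
      funext fun s => (hd s).deriv]
    exact hθ
  · intro s hs
    show ∫ x in (2:ℝ)..s, θ x / 2 = 0
    rw [intervalIntegral.integral_congr (g := fun _ => (0:ℝ))]
    · simp
    · intro x hx
      rw [uIcc_of_le hs] at hx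
      simp [hz x hx.1]
  · intro s hs
    exact θ.one_of_mem_closedBall (by simpa [θ] using hs)

/-- quadratic form -/
def Qf (P : Fin 3 → Fin 3 → ℝ) (y : E3) : ℝ := ∑ i, ∑ j, P i j * y i * y j

lemma Qf_contDiff : ContDiff ℝ ∞ (fun p : (Fin 3 → Fin 3 → ℝ) × E3 => Qf p.1 p.2) := by
  unfold Qf
  fun_prop

lemma dd_joint {F : (Fin 3 → Fin 3 → ℝ) → E3 → ℝ}
    (hF : ContDiff ℝ ∞ (fun p : (Fin 3 → Fin 3 → ℝ) × E3 => F p.1 p.2)) (v : E3) :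
    ContDiff ℝ ∞ (fun p : (Fin 3 → Fin 3 → ℝ) × E3 => dd v (F p.1) p.2) := by
  unfold dd
  refine ContDiff.fderiv_apply (f := fun (p : (Fin 3 → Fin 3 → ℝ) × E3) (y : E3) => F p.1 y)
    (n := ∞) (m := ∞) ?_ contDiff_snd contDiff_const (by simp)
  exact hF.comp (contDiff_fst.fst.prodMk contDiff_snd)

lemma Qf_hasFDerivAt (P : Fin 3 → Fin 3 → ℝ) (hs : ∀ i j, P i j = P j i) (y v : E3) :
    dd v (Qf P) y = 2 * ∑ i, ∑ j, P i j * y i * v j := by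
  have hc : ∀ i, HasFDerivAt (fun z : E3 => z i) (EuclideanSpace.proj i : E3 →L[ℝ] ℝ) y :=
    fun i => (EuclideanSpace.proj i : E3 →L[ℝ] ℝ).hasFDerivAt
  have : HasFDerivAt (Qf P) (∑ i, ∑ j, ((P i j * y i) • (EuclideanSpace.proj j : E3 →L[ℝ] ℝ) +
      (y j) • (P i j • (EuclideanSpace.proj i : E3 →L[ℝ] ℝ)))) y := by
    unfold Qf
    refine HasFDerivAt.fun_sum fun i _ => HasFDerivAt.fun_sum fun j _ => ?_
    exact ((hc i).const_mul (P i j)).mul (hc j)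
  unfold dd
  rw [this.fderiv]
  simp [Fin.sum_univ_three]
  rw [hs 1 0, hs 2 0, hs 2 1]
  ring

lemma kernel (m m' B : ℝ) (hm : 0 < m) (hm' : 0 < m') :
    ∃ R0 B0 c0 : ℝ, 0 < R0 ∧ 0 < B0 ∧ 0 < c0 ∧ ∀ P A : Fin 3 → Fin 3 → ℝ,
      (∀ i j, P i j = P j i) → (∀ i k, ∑ j, P i j * A k j = if i = k then 1 else 0) →
      (∀ i j, |P i j| ≤ B) → (∀ y, m * ‖y‖ ^ 2 ≤ Qf P y) → (∀ y, Qf P y ≤ m' * ‖y‖ ^ 2) →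
      ∃ φ ψ : E3 → ℝ, ContDiff ℝ ∞ φ ∧ ContDiff ℝ ∞ ψ ∧ tsupport φ ⊆ closedBall 0 R0 ∧
        tsupport ψ ⊆ closedBall 0 R0 ∧ (∀ k l y, |dd (bv k) (dd (bv l) φ) y| ≤ B0) ∧
        (∀ k l y, |dd (bv k) (dd (bv l) ψ) y| ≤ B0) ∧ c0 ≤ ∫ y, φ y ∧
        ∀ y, ∑ i, ∑ j, A i j * dd (bv i) (dd (bv j) ψ) y = Vop φ y := by
  obtain ⟨Ψ, θ, hΨ, hθ, hd, hΨ0, hθ0, hθn, hθ1⟩ := exists_prof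
  set R0 : ℝ := Real.sqrt (2 / m) with hR0
  have R0pos : 0 < R0 := Real.sqrt_pos.2 (by positivity)
  set r0 : ℝ := Real.sqrt (1 / m') with hr0
  have r0pos : 0 < r0 := Real.sqrt_pos.2 (by positivity)
  have bd : ∀ g : ℝ → ℝ, ContDiff ℝ ∞ g → ∃ C : ℝ, ∀ k l : Fin 3, ∀ P, (∀ i j, |P i j| ≤ B) →
      ∀ y ∈ closedBall (0:E3) R0, |dd (bv k) (dd (bv l) (fun y => g (Qf P y))) y| ≤ C := by
    intro g hg
    have hc : ∀ k l : Fin 3, ∃ C : ℝ, ∀ P, (∀ i j, |P i j| ≤ B) →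
      ∀ y ∈ closedBall (0:E3) R0, |dd (bv k) (dd (bv l) (fun y => g (Qf P y))) y| ≤ C := by
      intro k l
      have h1 := dd_joint (F := fun P => dd (bv l) (fun y => g (Qf P y)))
        (dd_joint (F := fun P y => g (Qf P y)) (hg.comp Qf_contDiff) (bv l)) (bv k)
      obtain ⟨C, hC⟩ := ((isCompact_closedBall (0 : Fin 3 → Fin 3 → ℝ) |B|).prod
        (isCompact_closedBall (0:E3) R0)).exists_bound_of_continuousOn h1.continuous.continuousOn
      refine ⟨C, fun P hP y hy => hC (P, y) ⟨?_, hy⟩⟩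
      rw [mem_closedBall_zero_iff, pi_norm_le_iff_of_nonneg (abs_nonneg _)]
      intro i
      rw [pi_norm_le_iff_of_nonneg (abs_nonneg _)]
      exact fun j => (hP i j).trans (le_abs_self B)
    choose C hC using hc
    refine ⟨∑ k, ∑ l, |C k l|, fun k l P hP y hy => (hC k l P hP y hy).trans ?_⟩
    calc C k l ≤ |C k l| := le_abs_self _
      _ ≤ ∑ l, |C k l| := Finset.single_le_sum (f := fun l => |C k l|)
          (fun _ _ => abs_nonneg _) (Finset.mem_univ l)
      _ ≤ _ := Finset.single_le_sum (f := fun k => ∑ l, |C k l|)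
          (fun _ _ => Finset.sum_nonneg fun _ _ => abs_nonneg _) (Finset.mem_univ k)
  obtain ⟨C1, hC1⟩ := bd Ψ hΨ
  obtain ⟨C2, hC2⟩ := bd θ hθ
  refine ⟨R0, |C1| + |C2| + 1, volume.real (ball (0:E3) r0), R0pos, by positivity,
    ?_, ?_⟩
  · exact ENNReal.toReal_pos (measure_ball_pos _ _ r0pos).ne' measure_ball_lt_top.ne
  intro P A hsym hPA hPB hlow hup
  have Qs : ContDiff ℝ ∞ (Qf P) := Qf_contDiff.comp (contDiff_const.prodMk contDiff_id)
  have hsm : ∀ g : ℝ → ℝ, ContDiff ℝ ∞ g → ContDiff ℝ ∞ (fun y => g (Qf P y)) :=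
    fun g hg => hg.comp Qs
  have hsupp : ∀ g : ℝ → ℝ, (∀ s, 2 ≤ s → g s = 0) →
      tsupport (fun y => g (Qf P y)) ⊆ closedBall 0 R0 := by
    intro g hg
    refine closure_minimal ?_ isClosed_closedBall
    intro y hy
    by_contra hcon
    rw [mem_closedBall_zero_iff, not_le] at hcon
    apply hy
    apply hg
    refine le_trans ?_ (hlow y)
    have : R0 ^ 2 ≤ ‖y‖ ^ 2 := pow_le_pow_left₀ R0pos.le hcon.le 2
    rw [hR0, Real.sq_sqrt (by positivity)] at this
    calc (2:ℝ) = m * (2 / m) := by field_simp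
      _ ≤ _ := by gcongr
  have hbd : ∀ (g : ℝ → ℝ) (C : ℝ), (∀ s, 2 ≤ s → g s = 0) →
      (∀ k l : Fin 3, ∀ P, (∀ i j, |P i j| ≤ B) →
      ∀ y ∈ closedBall (0:E3) R0, |dd (bv k) (dd (bv l) (fun y => g (Qf P y))) y| ≤ C) →
      ∀ k l y, |dd (bv k) (dd (bv l) (fun y => g (Qf P y))) y| ≤ |C| := by
    intro g C hg hC k l y
    by_cases hy : y ∈ closedBall (0:E3) R0
    · exact (hC k l P hPB y hy).trans (le_abs_self _)
    · have : dd (bv k) (dd (bv l) (fun y => g (Qf P y))) y = 0 :=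
        image_eq_zero_of_notMem_tsupport fun h => hy
          (hsupp g hg (dd_tsupport _ (dd_tsupport _ h)))
      rw [this]; simp
  refine ⟨fun y => θ (Qf P y), fun y => Ψ (Qf P y), hsm θ hθ, hsm Ψ hΨ, hsupp θ hθ0,
    hsupp Ψ hΨ0, ?_, ?_, ?_, ?_⟩
  · intro k l y
    have := hbd θ C2 hθ0 hC2 k l y
    linarith [abs_nonneg C1]
  · intro k l y
    have := hbd Ψ C1 hΨ0 hC1 k l y
    linarith [abs_nonneg C2]
  · have hintg : Integrable (fun y => θ (Qf P y)) :=
      (hsm θ hθ).continuous.integrable_of_hasCompactSupport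
        ((isCompact_closedBall 0 R0).of_isClosed_subset (isClosed_tsupport _) (hsupp θ hθ0))
    have h1 : ∫ y in ball (0:E3) r0, (1:ℝ) ≤ ∫ y in ball (0:E3) r0, θ (Qf P y) := by
      refine setIntegral_mono_on (integrableOn_const measure_ball_lt_top.ne) hintg.integrableOn measurableSet_ball ?_
      intro y hy
      rw [mem_ball_zero_iff] at hy
      rw [hθ1]
      have h2 := hlow y
      have h3 : 0 ≤ Qf P y := le_trans (by positivity) h2
      rw [abs_of_nonneg h3]
      refine (hup y).trans ?_
      have : ‖y‖ ^ 2 ≤ r0 ^ 2 := pow_le_pow_left₀ (norm_nonneg _) hy.le 2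
      rw [hr0, Real.sq_sqrt (by positivity)] at this
      calc m' * ‖y‖ ^ 2 ≤ m' * (1 / m') := by gcongr
        _ = 1 := by field_simp
    have h2 : ∫ y in ball (0:E3) r0, θ (Qf P y) ≤ ∫ y, θ (Qf P y) :=
      setIntegral_le_integral hintg (Eventually.of_forall fun y => hθn _)
    simp at h1
    linarith
  · intro y
    rw [Vop_eq ((hsm θ hθ).of_le (by exact_mod_cast le_top))]
    refine Finset.sum_congr rfl fun i _ => ?_
    have e1 : (fun z : E3 => z i * θ (Qf P z)) =
        fun z => ∑ j, A i j * dd (bv j) (fun y => Ψ (Qf P y)) z := by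
      ext z
      have h1 : ∀ v, dd v (fun y => Ψ (Qf P y)) z = θ (Qf P z) / 2 * dd v (Qf P) z := by
        intro v
        have := (hd (Qf P z)).comp_hasFDerivAt z
          (Qs.differentiable (by simp) z).hasFDerivAt
        unfold dd
        erw [this.fderiv]
        simp
      simp only [h1, Qf_hasFDerivAt P hsym]
      have h2 := fun k => hPA k i
      have h3 : z i = ∑ k, z k * ∑ j, P k j * A i j := by
        simp only [h2]; simp
      conv_lhs => rw [h3]
      simp [Fin.sum_univ_three, bv]
      ring
    rw [e1]
    unfold dd
    rw [fderiv_fun_sum]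
    · rw [_root_.sum_apply]
      refine Finset.sum_congr rfl fun j _ => ?_
      rw [fderiv_const_mul]
      · simp
      · exact (dd_smooth (bv j) (hsm Ψ hΨ)).differentiable (by simp) y
    · intro j _
      exact ((dd_smooth (bv j) (hsm Ψ hΨ)).differentiable (by simp) y).const_mul _

lemma inv_mat (A : Fin 3 → Fin 3 → ℝ) (lam M : ℝ) (hlam : 0 < lam) (hM : 0 < M)
    (hs : ∀ i j, A i j = A j i) (hb : ∀ i j, |A i j| ≤ M)
    (hel : ∀ ξ : Fin 3 → ℝ, lam * (∑ i, ξ i ^ 2) ≤ ∑ i, ∑ j, A i j * ξ i * ξ j) :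
    ∃ P : Fin 3 → Fin 3 → ℝ, (∀ i j, P i j = P j i) ∧
      (∀ i k, ∑ j, P i j * A k j = if i = k then 1 else 0) ∧
      (∀ i j, |P i j| ≤ 1 / lam) ∧ (∀ y, lam / (9 * M ^ 2) * ‖y‖ ^ 2 ≤ Qf P y) ∧
      (∀ y, Qf P y ≤ 1 / lam * ‖y‖ ^ 2) := by
  set T : Matrix (Fin 3) (Fin 3) ℝ := Matrix.of A with hT
  have hTs : T.transpose = T := by ext i j; simp [T, hs j i]
  have hdet : IsUnit T.det := by
    rw [isUnit_iff_ne_zero]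
    intro h0
    obtain ⟨v, hv, hv0⟩ := Matrix.exists_mulVec_eq_zero_iff.2 h0
    have h1 := hel v
    have h2 : ∑ i, ∑ j, A i j * v i * v j = 0 := by
      have : ∀ i, ∑ j, A i j * v i * v j = v i * (T.mulVec v) i := by
        intro i
        simp only [Matrix.mulVec, dotProduct, Finset.mul_sum, T, Matrix.of_apply]
        exact Finset.sum_congr rfl fun j _ => by ring
      simp [this, hv0]
    rw [h2] at h1
    have h3 : ∑ i, v i ^ 2 = 0 := le_antisymm (by nlinarith)
      (Finset.sum_nonneg fun i _ => sq_nonneg _)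
    rw [Finset.sum_eq_zero_iff_of_nonneg (fun i _ => sq_nonneg _)] at h3
    exact hv (funext fun i => by simpa using h3 i (Finset.mem_univ i))
  set P := T⁻¹ with hP
  have hPs : ∀ i j, P i j = P j i := by
    intro i j
    have : P.transpose = P := by rw [hP, Matrix.transpose_nonsing_inv, hTs]
    conv_lhs => rw [← this]
    rfl
  have hPT : P * T = 1 := Matrix.nonsing_inv_mul T hdet
  have hTP : T * P = 1 := Matrix.mul_nonsing_inv T hdet
  have key : ∀ y : E3, ∃ z : Fin 3 → ℝ, (∀ i, z i = ∑ j, P i j * y j) ∧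
      (∀ i, y i = ∑ j, A i j * z j) ∧ Qf P y = ∑ i, ∑ j, A i j * z i * z j ∧
      Qf P y = ∑ i, y i * z i := by
    intro y
    have h1 : ∀ i, y i = ∑ j, A i j * ∑ k, P j k * y k := by
      intro i
      have := congrFun (congrArg (fun S => Matrix.mulVec S (fun i => y i)) hTP) i
      simp only [← Matrix.mulVec_mulVec, Matrix.one_mulVec] at this
      rw [← this]; rfl
    have h2 : Qf P y = ∑ i, y i * ∑ j, P i j * y j := by
      unfold Qf
      simp only [Finset.mul_sum]
      exact Finset.sum_congr rfl fun i _ => Finset.sum_congr rfl fun j _ => by ring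
    refine ⟨fun i => ∑ j, P i j * y j, fun i => rfl, h1, ?_, h2⟩
    rw [h2]
    refine Finset.sum_congr rfl fun i _ => ?_
    conv_lhs => rw [h1 i]
    rw [Finset.sum_mul]
    exact Finset.sum_congr rfl fun j _ => by ring
  have up : ∀ y, Qf P y ≤ 1 / lam * ‖y‖ ^ 2 := by
    intro y
    obtain ⟨z, hz, hy, q1, q2⟩ := key y
    have h1 := hel z
    rw [← q1] at h1
    have h2 : Qf P y ≤ 1 / (2 * lam) * (∑ i, y i ^ 2) + lam / 2 * ∑ i, z i ^ 2 := by
      rw [q2, Finset.mul_sum, Finset.mul_sum, ← Finset.sum_add_distrib]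
      refine Finset.sum_le_sum fun i _ => ?_
      have : 0 ≤ 1 / (2 * lam) * (y i - lam * z i) ^ 2 := by positivity
      have e : 1 / (2 * lam) * (y i - lam * z i) ^ 2 =
        1 / (2 * lam) * y i ^ 2 + lam / 2 * z i ^ 2 - y i * z i := by field_simp; ring
      linarith
    rw [EuclideanSpace.real_norm_sq_eq]
    have : 1 / lam * ∑ i, y i ^ 2 = 2 * (1 / (2 * lam) * (∑ i, y i ^ 2)) := by field_simp
    linarith
  refine ⟨P, hPs, ?_, ?_, ?_, up⟩
  · intro i k
    have := congrFun (congrFun hPT i) k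
    rw [Matrix.mul_apply, Matrix.one_apply] at this
    rw [← this]
    exact Finset.sum_congr rfl fun j _ => by simp [T, hs k j]
  · intro i j
    obtain ⟨z, hz, hy, q1, q2⟩ := key (bv j)
    have h1 := hel z
    rw [← q1] at h1
    have h2 := h1.trans (up (bv j))
    rw [norm_bv] at h2
    have h3 : z i = P i j := by rw [hz]; simp [bv]
    have h4 : z i ^ 2 ≤ ∑ i, z i ^ 2 := Finset.single_le_sum (f := fun i => z i ^ 2)
      (fun i _ => sq_nonneg _) (Finset.mem_univ i)
    rw [← h3]
    apply abs_le_of_sq_le_sq _ (by positivity)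
    have h5 : lam * z i ^ 2 ≤ 1 / lam * 1 ^ 2 := le_trans (by gcongr) h2
    calc z i ^ 2 = 1 / lam * (lam * z i ^ 2) := by field_simp
      _ ≤ 1 / lam * (1 / lam * 1 ^ 2) := by gcongr
      _ = (1 / lam) ^ 2 := by ring
  · intro y
    obtain ⟨z, hz, hy, q1, q2⟩ := key y
    have h1 := hel z
    rw [← q1] at h1
    have h2 : ‖y‖ ^ 2 ≤ 9 * M ^ 2 * ∑ i, z i ^ 2 := by
      rw [EuclideanSpace.real_norm_sq_eq]
      have : ∀ i, y i ^ 2 ≤ 3 * M ^ 2 * ∑ j, z j ^ 2 := by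
        intro i
        rw [hy i]
        have c := Finset.sum_mul_sq_le_sq_mul_sq Finset.univ (fun j => A i j) z
        refine c.trans ?_
        gcongr
        have : ∀ j, A i j ^ 2 ≤ M ^ 2 := fun j => sq_le_sq' (abs_le.1 (hb i j)).1 (abs_le.1 (hb i j)).2
        calc ∑ j, A i j ^ 2 ≤ ∑ j : Fin 3, M ^ 2 := Finset.sum_le_sum fun j _ => this j
          _ = 3 * M ^ 2 := by simp
      calc ∑ i, y i ^ 2 ≤ ∑ i : Fin 3, 3 * M ^ 2 * ∑ j, z j ^ 2 := Finset.sum_le_sum fun i _ => this i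
        _ = _ := by simp; ring
    calc lam / (9 * M ^ 2) * ‖y‖ ^ 2 ≤ lam / (9 * M ^ 2) * (9 * M ^ 2 * ∑ i, z i ^ 2) := by gcongr
      _ = lam * ∑ i, z i ^ 2 := by field_simp
      _ ≤ _ := h1


lemma ibp2 {h g : E3 → ℝ} (v v' : E3) (hh : ContDiff ℝ 2 h) (hg : ContDiff ℝ 2 g)
    (hc : HasCompactSupport h) :
    ∫ x, dd v (dd v' h) x * g x = ∫ x, h x * dd v (dd v' g) x := by
  have e1 := ibp_s11 v (dd_contDiff (m := 1) v' hh (by norm_num)) (hg.of_le (by norm_num))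
    (dd_compact v' hc)
  have e2 := ibp_s11 v' (hh.of_le (by norm_num)) (dd_contDiff (m := 1) v hg (by norm_num)) hc
  rw [dd_comm hg v v']
  linarith

lemma int_bound {χ g : E3 → ℝ} {R0 B0 b : ℝ} (hB : 0 ≤ B0) (hs : tsupport χ ⊆ closedBall 0 R0)
    (hχ : ∀ y, |χ y| ≤ B0) (hg : ∀ y ∈ closedBall (0:E3) R0, |g y| ≤ b) :
    |∫ y, χ y * g y| ≤ B0 * b * volume.real (closedBall (0:E3) R0) := by
  rw [← setIntegral_eq_integral_of_forall_compl_eq_zero (s := closedBall (0:E3) R0)]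
  · refine norm_setIntegral_le_of_norm_le_const (f := fun y => χ y * g y)
      (isCompact_closedBall _ _).measure_lt_top ?_
    intro y hy
    rw [norm_mul]
    exact mul_le_mul (hχ y) (hg y hy) (abs_nonneg _) hB
  · intro y hy
    rw [image_eq_zero_of_notMem_tsupport (fun h => hy (hs h)), zero_mul]

/-- rescaled function -/
def sc (u : E3 → ℝ) (x : E3) (t : ℝ) : E3 → ℝ := fun y => u (x + t • y)

lemma sc_contDiff {n : ℕ∞ω} {u : E3 → ℝ} (hu : ContDiff ℝ n u) (x : E3) (t : ℝ) :
    ContDiff ℝ n (sc u x t) := hu.comp (by fun_prop)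

lemma sc_fderiv {u : E3 → ℝ} (hu : Differentiable ℝ u) (x : E3) (t : ℝ) (y v : E3) :
    fderiv ℝ (sc u x t) y v = t * fderiv ℝ u (x + t • y) v := by
  have h1 : HasFDerivAt (fun y : E3 => x + t • y) (t • ContinuousLinearMap.id ℝ E3) y :=
    ((hasFDerivAt_id y).const_smul t).const_add x
  have := (hu (x + t • y)).hasFDerivAt.comp y h1
  unfold sc
  erw [this.fderiv]
  simp

lemma sc_dd2 {u : E3 → ℝ} (hu : ContDiff ℝ 2 u) (x : E3) (t : ℝ) (v v' : E3) (y : E3) :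
    dd v (dd v' (sc u x t)) y = t ^ 2 * dd v (dd v' u) (x + t • y) := by
  have e1 : dd v' (sc u x t) = fun y => t * sc (dd v' u) x t y := by
    ext z; exact sc_fderiv (hu.differentiable (by norm_num)) x t z v'
  have hd : Differentiable ℝ (dd v' u) :=
    (dd_contDiff (m := 1) v' hu (by norm_num)).differentiable (by norm_num)
  have hd2 : Differentiable ℝ (sc (dd v' u) x t) :=
    (sc_contDiff (dd_contDiff (m := 1) v' hu (by norm_num)) x t).differentiable (by norm_num)
  rw [e1]
  unfold dd at *
  rw [fderiv_const_mul (hd2 y)]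
  simp only [_root_.smul_apply, smul_eq_mul]
  rw [sc_fderiv hd]
  ring

lemma J_deriv {ζ u : E3 → ℝ} (hζ : Continuous ζ) (hc : HasCompactSupport ζ)
    (hu : ContDiff ℝ 1 u) (x : E3) (t : ℝ) :
    HasDerivAt (fun t => ∫ y, ζ y * sc u x t y) (∫ y, ζ y * fderiv ℝ u (x + t • y) y) t := by
  have c1 : Continuous (fun p : ℝ × E3 => fderiv ℝ u (x + p.1 • p.2) p.2) := by
    have := hu.continuous_fderiv (by norm_num)
    fun_prop
  obtain ⟨C, hC⟩ := ((isCompact_closedBall t 1).prod hc).exists_bound_of_continuousOn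
    c1.continuousOn
  refine (hasDerivAt_integral_of_dominated_loc_of_deriv_le (μ := volume)
    (F := fun t y => ζ y * sc u x t y)
    (F' := fun t y => ζ y * fderiv ℝ u (x + t • y) y) (s := closedBall t 1)
    (bound := fun y => |ζ y| * |C|) (closedBall_mem_nhds t one_pos) ?_ ?_ ?_ ?_ ?_ ?_).2
  · exact Eventually.of_forall fun s =>
      (hζ.mul (sc_contDiff hu x s).continuous).aestronglyMeasurable
  · exact (hζ.mul (sc_contDiff hu x t).continuous).integrable_of_hasCompactSupport hc.mul_right
  · have : Continuous (fun y => fderiv ℝ u (x + t • y) y) :=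
      c1.comp (continuous_const.prodMk continuous_id)
    exact (hζ.mul this).aestronglyMeasurable
  · refine Eventually.of_forall fun y s hs => ?_
    rw [norm_mul, Real.norm_eq_abs]
    by_cases hy : y ∈ tsupport ζ
    · gcongr
      exact (hC (s, y) ⟨hs, hy⟩).trans (le_abs_self C)
    · rw [image_eq_zero_of_notMem_tsupport hy]; simp
  · exact (hζ.abs.mul continuous_const).integrable_of_hasCompactSupport
      ((hc.comp_left (g := fun r : ℝ => |r|) abs_zero).mul_right)
  · refine Eventually.of_forall fun y s hs => ?_
    have h1 : HasDerivAt (fun s : ℝ => x + s • y) y s := by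
      simpa using ((hasDerivAt_id s).smul_const y).const_add x
    exact ((hu.differentiable (by norm_num) (x + s • y)).hasFDerivAt.comp_hasDerivAt s h1).const_mul _

lemma G_cont {φ g : E3 → ℝ} (hφ : Continuous φ) (hc : HasCompactSupport φ)
    (hg : Continuous g) (x : E3) : Continuous (fun t : ℝ => ∫ y, φ y * g (x + t • y)) := by
  have h := continuous_parametric_integral_of_continuous (μ := (volume : Measure E3))
    (f := fun (t : ℝ) (y : E3) => φ y * g (x + t • y)) (by unfold Function.uncurry; fun_prop) hc
  convert h using 2 with t
  rw [setIntegral_eq_integral_of_forall_compl_eq_zero]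
  intro y hy
  rw [image_eq_zero_of_notMem_tsupport hy, zero_mul]

lemma core_kernel {φ ψ u : E3 → ℝ} {A : Fin 3 → Fin 3 → ℝ} {R0 B0 c0 S H g0 T : ℝ} {x : E3}
    (hR0 : 0 < R0) (hB0 : 0 < B0) (hφ : ContDiff ℝ ∞ φ) (hψ : ContDiff ℝ ∞ ψ)
    (sφ : tsupport φ ⊆ closedBall 0 R0) (sψ : tsupport ψ ⊆ closedBall 0 R0)
    (bφ : ∀ k l y, |dd (bv k) (dd (bv l) φ) y| ≤ B0)
    (bψ : ∀ k l y, |dd (bv k) (dd (bv l) ψ) y| ≤ B0) (hc0 : c0 ≤ ∫ y, φ y)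
    (hL : ∀ y, ∑ i, ∑ j, A i j * dd (bv i) (dd (bv j) ψ) y = Vop φ y)
    (hu : ContDiff ℝ 2 u) (hT : 0 < T) (hH0 : 0 ≤ H)
    (hS : ∀ y ∈ closedBall x (R0 * T), |u y| ≤ S)
    (hH : ∀ y ∈ closedBall x (R0 * T),
      |∑ i, ∑ j, A i j * dd (bv i) (dd (bv j) u) y - g0| ≤ H * ‖y - x‖) (k l : Fin 3) :
    c0 * |dd (bv k) (dd (bv l) u) x| ≤
      B0 * volume.real (closedBall (0:E3) R0) * (S / T ^ 2 + H * R0 * T) := by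
  set vol := volume.real (closedBall (0:E3) R0) with hvol
  have cφ : HasCompactSupport φ :=
    (isCompact_closedBall 0 R0).of_isClosed_subset (isClosed_tsupport _) sφ
  have cψ : HasCompactSupport ψ :=
    (isCompact_closedBall 0 R0).of_isClosed_subset (isClosed_tsupport _) sψ
  have le2 : ∀ {h : E3 → ℝ}, ContDiff ℝ ∞ h → ContDiff ℝ 2 h :=
    fun h => contDiff_infty.1 h 2
  have le1 : ∀ {h : E3 → ℝ}, ContDiff ℝ ∞ h → ContDiff ℝ 1 h :=
    fun h => h.of_le (by exact_mod_cast le_top)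
  set ζ := dd (bv k) (dd (bv l) φ) with hζ
  set χ := dd (bv k) (dd (bv l) ψ) with hχ
  have sζ : ContDiff ℝ ∞ ζ := dd_smooth _ (dd_smooth _ hφ)
  have sχ : ContDiff ℝ ∞ χ := dd_smooth _ (dd_smooth _ hψ)
  have cζ : HasCompactSupport ζ := dd_compact _ (dd_compact _ cφ)
  have cχ : HasCompactSupport χ := dd_compact _ (dd_compact _ cψ)
  have tζ : tsupport ζ ⊆ closedBall 0 R0 := ((dd_tsupport _).trans (dd_tsupport _)).trans sφ
  have tχ : tsupport χ ⊆ closedBall 0 R0 := ((dd_tsupport _).trans (dd_tsupport _)).trans sψ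
  set g : E3 → ℝ := dd (bv k) (dd (bv l) u) with hg
  have gc : ∀ v w, Continuous (dd v (dd w u)) := fun v w =>
    (dd_contDiff (m := 0) _ (dd_contDiff (m := 1) w hu (by norm_num)) (by norm_num)).continuous
  set L : E3 → ℝ := fun y => ∑ i, ∑ j, A i j * dd (bv i) (dd (bv j) u) y with hLdef
  have Lc : Continuous L := continuous_finsetSum _ fun i _ => continuous_finsetSum _ fun j _ =>
    continuous_const.mul (gc _ _)
  let J : ℝ → ℝ := fun t => ∫ y, ζ y * sc u x t y
  let G : ℝ → ℝ := fun t => ∫ y, φ y * g (x + t • y)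
  have hJG : ∀ t, J t = t ^ 2 * G t := by
    intro t
    simp only [J, G]
    rw [ibp2 _ _ (le2 hφ) (sc_contDiff hu x t) cφ, ← integral_const_mul]
    refine integral_congr_ae (Eventually.of_forall fun y => ?_)
    simp only [sc_dd2 hu]
    ring
  have hcomm : ∀ i j, dd (bv k) (dd (bv l) (dd (bv i) (dd (bv j) ψ))) =
      dd (bv i) (dd (bv j) χ) := by
    intro i j
    have s1 := fun v => dd_smooth v hψ
    have s2 := fun v w => dd_smooth v (s1 w)
    rw [dd_comm (le2 (s1 (bv j))) (bv l) (bv i), dd_comm (le2 hψ) (bv l) (bv j),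
      dd_comm (le2 (s2 _ _)) (bv k) (bv i), dd_comm (le2 (s1 _)) (bv k) (bv j)]
  have hV : ∀ y, Vop ζ y + 2 * ζ y = ∑ i, ∑ j, A i j * dd (bv i) (dd (bv j) χ) y := by
    intro y
    have e1 : dd (bv l) (Vop φ) = fun y => Vop (dd (bv l) φ) y + dd (bv l) φ y :=
      funext fun y => dd_Vop (le2 hφ) _ y
    have sl := dd_smooth (bv l) hφ
    have sV : Differentiable ℝ (Vop (dd (bv l) φ)) := by
      unfold Vop
      exact ((((le2 sl).fderiv_right (m := 1) (by norm_num)).clm_apply contDiff_id).add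
        (contDiff_const.mul (le1 sl))).differentiable (by norm_num)
    have e2 : dd (bv k) (dd (bv l) (Vop φ)) y = Vop ζ y + 2 * ζ y := by
      rw [e1]
      have : dd (bv k) (fun y => Vop (dd (bv l) φ) y + dd (bv l) φ y) y =
          dd (bv k) (Vop (dd (bv l) φ)) y + ζ y := by
        have h := fderiv_fun_add (sV y) (sl.differentiable (by simp) y)
        have h' := congrArg (fun T : E3 →L[ℝ] ℝ => T (bv k)) h
        exact h'
      rw [this, dd_Vop (le2 sl)]
      ring
    rw [← e2, ← funext hL]
    have lin : ∀ (v : E3) (F : Fin 3 → Fin 3 → E3 → ℝ), (∀ i j, Differentiable ℝ (F i j)) →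
        dd v (fun y => ∑ i, ∑ j, A i j * F i j y) = fun y => ∑ i, ∑ j, A i j * dd v (F i j) y := by
      intro v F hF
      ext y
      have h1 : HasFDerivAt (fun y => ∑ i, ∑ j, A i j * F i j y)
          (∑ i, ∑ j, A i j • fderiv ℝ (F i j) y) y :=
        HasFDerivAt.fun_sum fun i _ => HasFDerivAt.fun_sum fun j _ =>
          ((hF i j y).hasFDerivAt).const_mul _
      unfold dd
      rw [h1.fderiv]
      simp
    have sij : ∀ i j : Fin 3, ContDiff ℝ ∞ (dd (bv i) (dd (bv j) ψ)) :=
      fun i j => dd_smooth _ (dd_smooth _ hψ)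
    rw [lin _ _ (fun i j => (sij i j).differentiable (by simp)),
      lin _ (fun i j => dd (bv l) (dd (bv i) (dd (bv j) ψ)))
        (fun i j => (dd_smooth _ (sij i j)).differentiable (by simp))]
    simp only [hcomm]
  have hχ0 : ∫ y, χ y = 0 := by
    have := ibp2 (bv k) (bv l) (le2 hψ) (contDiff_const (c := (1:ℝ))) cψ
    simp only [mul_one] at this
    rw [this]
    have z : dd (bv l) (fun _ : E3 => (1:ℝ)) = fun _ => 0 := by ext y; simp [dd]
    have z' : dd (bv k) (fun _ : E3 => (0:ℝ)) = fun _ => 0 := by ext y; simp [dd]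
    rw [z, z']; simp
  have hid : ∀ t, t * (∫ y, ζ y * fderiv ℝ u (x + t • y) y) - 2 * J t =
      - (t ^ 2 * ∫ y, χ y * (L (x + t • y) - g0)) := by
    intro t
    have su := sc_contDiff hu x t
    have su1 : ContDiff ℝ 1 (sc u x t) := su.of_le (by norm_num)
    have e1 : t * (∫ y, ζ y * fderiv ℝ u (x + t • y) y) = - ∫ y, Vop ζ y * sc u x t y := by
      rw [← ibp_V (le1 sζ) su1 cζ, ← integral_const_mul]
      refine integral_congr_ae (Eventually.of_forall fun y => ?_)
      simp only [sc_fderiv (hu.differentiable (by norm_num))]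
      ring
    have iζ : Integrable (fun y => ζ y * sc u x t y) :=
      (sζ.continuous.mul su.continuous).integrable_of_hasCompactSupport cζ.mul_right
    have iij : ∀ i j : Fin 3, Integrable (fun y => dd (bv i) (dd (bv j) χ) y * sc u x t y) :=
      fun i j => ((dd_smooth _ (dd_smooth _ sχ)).continuous.mul
        su.continuous).integrable_of_hasCompactSupport
        (dd_compact _ (dd_compact _ cχ)).mul_right
    have iij' : ∀ i j : Fin 3, Integrable (fun y => χ y * dd (bv i) (dd (bv j) u) (x + t • y)) :=
      fun i j => (sχ.continuous.mul ((gc _ _).comp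
        (by fun_prop))).integrable_of_hasCompactSupport cχ.mul_right
    have eV : (fun y => Vop ζ y * sc u x t y) = fun y =>
        (∑ i, ∑ j, A i j * (dd (bv i) (dd (bv j) χ) y * sc u x t y)) -
          2 * (ζ y * sc u x t y) := by
      ext y
      have := hV y
      have h2 : Vop ζ y = (∑ i, ∑ j, A i j * dd (bv i) (dd (bv j) χ) y) - 2 * ζ y := by linarith
      rw [h2, sub_mul, Finset.sum_mul]
      simp only [Finset.sum_mul]
      congr 1
      · exact Finset.sum_congr rfl fun i _ => Finset.sum_congr rfl fun j _ => by ring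
      · ring
    have e2 : ∫ y, Vop ζ y * sc u x t y =
        (∑ i, ∑ j, A i j * ∫ y, dd (bv i) (dd (bv j) χ) y * sc u x t y) - 2 * J t := by
      rw [eV, integral_sub, integral_finsetSum, integral_const_mul]
      · congr 1
        refine Finset.sum_congr rfl fun i _ => ?_
        rw [integral_finsetSum]
        · exact Finset.sum_congr rfl fun j _ => integral_const_mul _ _
        · exact fun j _ => (iij i j).const_mul _
      · exact fun i _ => integrable_finsetSum _ fun j _ => (iij i j).const_mul _
      · exact integrable_finsetSum _ fun i _ => integrable_finsetSum _ fun j _ =>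
          (iij i j).const_mul _
      · exact iζ.const_mul _
    have e3 : ∀ i j : Fin 3, ∫ y, dd (bv i) (dd (bv j) χ) y * sc u x t y =
        t ^ 2 * ∫ y, χ y * dd (bv i) (dd (bv j) u) (x + t • y) := by
      intro i j
      rw [ibp2 _ _ (le2 sχ) su cχ, ← integral_const_mul]
      refine integral_congr_ae (Eventually.of_forall fun y => ?_)
      simp only [sc_dd2 hu]
      ring
    have e4 : ∫ y, χ y * (L (x + t • y) - g0) =
        ∑ i, ∑ j, A i j * ∫ y, χ y * dd (bv i) (dd (bv j) u) (x + t • y) := by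
      have : (fun y => χ y * (L (x + t • y) - g0)) = fun y =>
          (∑ i, ∑ j, A i j * (χ y * dd (bv i) (dd (bv j) u) (x + t • y))) - g0 * χ y := by
        ext y
        simp only [hLdef, mul_sub, Finset.mul_sum]
        congr 1
        · exact Finset.sum_congr rfl fun i _ => Finset.sum_congr rfl fun j _ => by ring
        · ring
      rw [this, integral_sub, integral_finsetSum, integral_const_mul, hχ0]
      · rw [mul_zero, sub_zero]
        refine Finset.sum_congr rfl fun i _ => ?_
        rw [integral_finsetSum]
        · exact Finset.sum_congr rfl fun j _ => integral_const_mul _ _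
        · exact fun j _ => (iij' i j).const_mul _
      · exact fun i _ => integrable_finsetSum _ fun j _ => (iij' i j).const_mul _
      · exact integrable_finsetSum _ fun i _ => integrable_finsetSum _ fun j _ =>
          (iij' i j).const_mul _
      · exact (sχ.continuous.integrable_of_hasCompactSupport cχ).const_mul _
    rw [e1, e2, e4]
    simp only [e3]
    rw [Finset.mul_sum]
    simp only [Finset.mul_sum]
    have : ∀ i j : Fin 3, A i j * (t ^ 2 * ∫ y, χ y * dd (bv i) (dd (bv j) u) (x + t • y)) =
      t ^ 2 * (A i j * ∫ y, χ y * dd (bv i) (dd (bv j) u) (x + t • y)) := fun i j => by ring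
    simp only [this]
    ring
  have hmem : ∀ t, 0 < t → t ≤ T → ∀ y ∈ closedBall (0:E3) R0, x + t • y ∈ closedBall x (R0 * T) := by
    intro t ht htT y hy
    rw [mem_closedBall_zero_iff] at hy
    rw [mem_closedBall, dist_eq_norm, add_sub_cancel_left, norm_smul, Real.norm_eq_abs,
      abs_of_pos ht, mul_comm]
    gcongr
  set D := B0 * (H * R0) * vol with hD
  have hGd : ∀ t, 0 < t → HasDerivAt G (- (1 / t * ∫ y, χ y * (L (x + t • y) - g0))) t := by
    intro t ht
    have h1 := (J_deriv sζ.continuous cζ (hu.of_le (by norm_num)) x t).div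
      (hasDerivAt_pow 2 t) (by positivity)
    have hev : G =ᶠ[𝓝 t] ((fun t => ∫ y, ζ y * sc u x t y) / fun s : ℝ => s ^ 2) := by
      filter_upwards [lt_mem_nhds ht] with s hs
      have := hJG s
      simp only [J] at this
      simp only [Pi.div_apply]
      rw [this]; field_simp
    have h2 := h1.congr_of_eventuallyEq hev
    refine HasDerivAt.congr_deriv h2 (Eq.symm ?_)
    have h3 := hid t
    simp only [J] at h3
    rw [eq_div_iff (by positivity)]
    have : ∀ I : ℝ, -(1 / t * I) * (t ^ 2) ^ 2 = t * (- (t ^ 2 * I)) := by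
      intro I; field_simp
    rw [this, ← h3]
    norm_num
    ring
  have hGb : ∀ t, 0 < t → t ≤ T → ‖- (1 / t * ∫ y, χ y * (L (x + t • y) - g0))‖ ≤ D := by
    intro t ht htT
    have := int_bound (g := fun y => L (x + t • y) - g0) (b := H * (R0 * t)) hB0.le tχ (bψ k l) (by
      intro y hy
      refine (hH _ (hmem t ht htT y hy)).trans ?_
      rw [mem_closedBall_zero_iff] at hy
      rw [add_sub_cancel_left, norm_smul, Real.norm_eq_abs, abs_of_pos ht, mul_comm t]
      gcongr)
    rw [norm_neg, norm_mul, Real.norm_eq_abs, Real.norm_eq_abs, abs_of_pos (by positivity : 0 < 1 / t)]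
    calc 1 / t * |∫ y, χ y * (L (x + t • y) - g0)| ≤
        1 / t * (B0 * (H * (R0 * t)) * vol) := by gcongr
      _ = D := by rw [hD]; field_simp
  have hD0 : 0 ≤ D := by rw [hD, hvol]; positivity
  have hGc : Continuous G := G_cont hφ.continuous cφ (gc _ _) x
  have hmv : ∀ t, 0 < t → t ≤ T → |G t - G T| ≤ D * T := by
    intro t ht htT
    have := Convex.norm_image_sub_le_of_norm_hasDerivWithin_le (f := G) (s := Icc t T) (x := T)
      (y := t) (C := D)
      (fun s hs => (hGd s (ht.trans_le hs.1)).hasDerivWithinAt)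
      (fun s hs => hGb s (ht.trans_le hs.1) hs.2) (convex_Icc _ _) ⟨htT, le_rfl⟩ ⟨le_rfl, htT⟩
    rw [Real.norm_eq_abs] at this
    refine this.trans ?_
    gcongr
    rw [Real.norm_eq_abs, abs_le]; constructor <;> linarith
  have hlim : |G 0 - G T| ≤ D * T := by
    have h1 : Tendsto (fun t => |G t - G T|) (𝓝[>] 0) (𝓝 |G 0 - G T|) :=
      (((hGc.sub continuous_const).abs).tendsto 0).mono_left nhdsWithin_le_nhds
    refine le_of_tendsto h1 ?_
    filter_upwards [Ioc_mem_nhdsGT hT] with t ht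
    exact hmv t ht.1 ht.2
  have hGT : |G T| ≤ B0 * S * vol / T ^ 2 := by
    have := int_bound (g := sc u x T) (b := S) hB0.le tζ (bφ k l)
      (fun y hy => hS _ (hmem T hT le_rfl y hy))
    have h2 := hJG T
    simp only [J] at h2
    rw [h2, abs_mul, abs_of_pos (by positivity : 0 < T ^ 2)] at this
    rw [le_div_iff₀ (by positivity)]
    linarith
  have hG0 : G 0 = (∫ y, φ y) * g x := by
    simp only [G, zero_smul, add_zero]
    rw [integral_mul_const]
  have h1 : |G 0| ≤ D * T + B0 * S * vol / T ^ 2 := by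
    have := abs_sub_abs_le_abs_sub (G 0) (G T)
    linarith
  rw [hG0, abs_mul] at h1
  calc c0 * |g x| ≤ |∫ y, φ y| * |g x| := by
        gcongr; exact hc0.trans (le_abs_self _)
    _ ≤ _ := h1
    _ = _ := by rw [hD]; ring

lemma core (lam M : ℝ) (hlam : 0 < lam) (hM : 0 < M) :
    ∃ C : ℝ, 0 < C ∧ ∀ (A : Fin 3 → Fin 3 → ℝ) (u : E3 → ℝ) (x : E3) (ρ S H g0 : ℝ),
      (∀ i j, A i j = A j i) → (∀ i j, |A i j| ≤ M) →
      (∀ ξ : Fin 3 → ℝ, lam * (∑ i, ξ i ^ 2) ≤ ∑ i, ∑ j, A i j * ξ i * ξ j) →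
      ContDiff ℝ 2 u → 0 < ρ → 0 ≤ H →
      (∀ y ∈ closedBall x ρ, |u y| ≤ S) →
      (∀ y ∈ closedBall x ρ,
        |∑ i, ∑ j, A i j * dd (bv i) (dd (bv j) u) y - g0| ≤ H * ‖y - x‖) →
      ‖fderiv ℝ (fderiv ℝ u) x‖ ≤ C * (S / ρ ^ 2 + H * ρ) := by
  obtain ⟨R0, B0, c0, hR0, hB0, hc0, hK⟩ := kernel (lam / (9 * M ^ 2)) (1 / lam) (1 / lam)
    (by positivity) (by positivity)
  set vol := volume.real (closedBall (0:E3) R0) with hvol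
  have hvol0 : 0 ≤ vol := by rw [hvol]; positivity
  refine ⟨9 * (B0 * vol * (R0 ^ 2 + 1) / c0) + 1, by positivity, ?_⟩
  intro A u x ρ S H g0 hs hb hel hu hρ hH0 hS hH
  obtain ⟨P, p1, p2, p3, p4, p5⟩ := inv_mat A lam M hlam hM hs hb hel
  obtain ⟨φ, ψ, hφ, hψ, sφ, sψ, bφ, bψ, hc, hL⟩ := hK P A p1 p2 p3 p4 p5
  have hT : R0 * (ρ / R0) = ρ := by field_simp
  have hS0 : 0 ≤ S := (abs_nonneg _).trans (hS x (mem_closedBall_self hρ.le))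
  set Y := S / ρ ^ 2 + H * ρ with hY
  have hY0 : 0 ≤ Y := by positivity
  have key : ∀ k l, |dd (bv k) (dd (bv l) u) x| ≤ (B0 * vol * (R0 ^ 2 + 1) / c0) * Y := by
    intro k l
    have := core_kernel (T := ρ / R0) (x := x) (S := S) (H := H) (g0 := g0) hR0 hB0 hφ hψ sφ sψ bφ
      bψ hc hL hu (by positivity) hH0 (by rwa [hT]) (by rwa [hT]) k l
    rw [← mul_le_mul_iff_right₀ hc0]
    refine this.trans ?_
    have e : S / (ρ / R0) ^ 2 + H * R0 * (ρ / R0) ≤ (R0 ^ 2 + 1) * Y := by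
      have e1 : S / (ρ / R0) ^ 2 + H * R0 * (ρ / R0) = R0 ^ 2 * (S / ρ ^ 2) + H * ρ := by
        field_simp
      rw [e1, hY]
      have : 0 ≤ S / ρ ^ 2 := by positivity
      have : 0 ≤ R0 ^ 2 * (H * ρ) := by positivity
      linarith
    calc B0 * vol * (S / (ρ / R0) ^ 2 + H * R0 * (ρ / R0)) ≤ B0 * vol * ((R0 ^ 2 + 1) * Y) := by
          gcongr
      _ = _ := by field_simp
  set Z := (B0 * vol * (R0 ^ 2 + 1) / c0) with hZ
  have hZ0 : 0 ≤ Z := by positivity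
  refine ContinuousLinearMap.opNorm_le_bound _ (by positivity) fun v => ?_
  refine ContinuousLinearMap.opNorm_le_bound _ (by positivity) fun w => ?_
  have ex : fderiv ℝ (fderiv ℝ u) x v w =
      ∑ i, ∑ j, v i * w j * dd (bv i) (dd (bv j) u) x := by
    conv_lhs => rw [bv_sum v, bv_sum w]
    simp only [map_sum, map_smul, _root_.sum_apply, _root_.smul_apply, smul_eq_mul,
      dd_dd hu, Finset.mul_sum]
    rw [Finset.sum_comm]
    exact Finset.sum_congr rfl fun i _ => Finset.sum_congr rfl fun j _ => by ring
  rw [ex, Real.norm_eq_abs]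
  calc |∑ i, ∑ j, v i * w j * dd (bv i) (dd (bv j) u) x|
      ≤ ∑ i, |∑ j, v i * w j * dd (bv i) (dd (bv j) u) x| := Finset.abs_sum_le_sum_abs _ _
    _ ≤ ∑ i : Fin 3, ∑ j : Fin 3, ‖v‖ * ‖w‖ * (Z * Y) := by
        refine Finset.sum_le_sum fun i _ => (Finset.abs_sum_le_sum_abs _ _).trans ?_
        refine Finset.sum_le_sum fun j _ => ?_
        rw [abs_mul, abs_mul]
        gcongr
        · exact PiLp.norm_apply_le v i
        · exact PiLp.norm_apply_le w j
        · exact key i j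
    _ = 9 * Z * Y * ‖v‖ * ‖w‖ := by simp; ring
    _ ≤ _ := by gcongr; linarith


lemma lip_D {u : E3 → ℝ} (hu : ContDiff ℝ 2 u) {s : Set E3} (hs : Convex ℝ s) {N : ℝ}
    (hN : ∀ z ∈ s, ‖fderiv ℝ (fderiv ℝ u) z‖ ≤ N) {y z : E3} (hy : y ∈ s) (hz : z ∈ s) :
    ‖fderiv ℝ u z - fderiv ℝ u y‖ ≤ N * ‖z - y‖ :=
  hs.norm_image_sub_le_of_norm_fderiv_le (𝕜 := ℝ) (fun w _ =>
    (hu.fderiv_right (m := 1) (by norm_num)).differentiable (by norm_num) w) hN hy hz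

lemma interp {u : E3 → ℝ} (hu : ContDiff ℝ 2 u) {y : E3} {h S N : ℝ} (hh : 0 < h)
    (hS : ∀ z ∈ closedBall y h, |u z| ≤ S)
    (hN : ∀ z ∈ closedBall y h, ‖fderiv ℝ (fderiv ℝ u) z‖ ≤ N) :
    ‖fderiv ℝ u y‖ ≤ 2 * S / h + N * h := by
  have ymem : y ∈ closedBall y h := mem_closedBall_self hh.le
  have hS0 : 0 ≤ S := (abs_nonneg _).trans (hS y ymem)
  have hN0 : 0 ≤ N := le_trans (norm_nonneg (fderiv ℝ (fderiv ℝ u) y)) (hN y ymem)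
  refine ContinuousLinearMap.opNorm_le_bound _ (by positivity) fun v => ?_
  rcases eq_or_ne v 0 with rfl | hv
  · simp
  have hv' : 0 < ‖v‖ := norm_pos_iff.2 hv
  set z := y + (h / ‖v‖) • v with hz
  have hzy : ‖z - y‖ = h := by
    rw [hz, add_sub_cancel_left, norm_smul, Real.norm_eq_abs, abs_of_pos (by positivity)]
    field_simp
  have zmem : z ∈ closedBall y h := by rw [mem_closedBall, dist_eq_norm, hzy]
  have h1 := (convex_closedBall y h).norm_image_sub_le_of_norm_fderiv_le' (𝕜 := ℝ) (f := u)
    (φ := fderiv ℝ u y) (C := N * h) (fun w _ => hu.differentiable (by norm_num) w)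
    (fun w hw => (lip_D hu (convex_closedBall y h) hN ymem hw).trans (by
      gcongr
      rwa [mem_closedBall, dist_eq_norm] at hw)) ymem zmem
  rw [hzy, Real.norm_eq_abs] at h1
  have h2 : fderiv ℝ u y (z - y) = h / ‖v‖ * fderiv ℝ u y v := by
    rw [hz, add_sub_cancel_left, map_smul, smul_eq_mul]
  have a1 := abs_le.1 (hS z zmem)
  have a2 := abs_le.1 (hS y ymem)
  have a3 := abs_le.1 h1
  have h3 : |h / ‖v‖ * fderiv ℝ u y v| ≤ 2 * S + N * h * h := by
    rw [← h2, abs_le]; constructor <;> linarith [a1.1, a1.2, a2.1, a2.2, a3.1, a3.2]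
  rw [abs_mul, abs_of_pos (by positivity : 0 < h / ‖v‖)] at h3
  rw [Real.norm_eq_abs]
  calc |fderiv ℝ u y v| = ‖v‖ / h * (h / ‖v‖ * |fderiv ℝ u y v|) := by field_simp
    _ ≤ ‖v‖ / h * (2 * S + N * h * h) := by gcongr
    _ = _ := by field_simp

lemma abs_dd_le (u : E3 → ℝ) (j : Fin 3) (x : E3) : |dd (bv j) u x| ≤ ‖fderiv ℝ u x‖ := by
  have := (fderiv ℝ u x).le_opNorm (bv j)
  rwa [norm_bv, mul_one] at this

lemma abs_dd2_le {u : E3 → ℝ} (hu : ContDiff ℝ 2 u) (i j : Fin 3) (x : E3) :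
    |dd (bv i) (dd (bv j) u) x| ≤ ‖fderiv ℝ (fderiv ℝ u) x‖ := by
  rw [dd_dd hu]
  have := (fderiv ℝ (fderiv ℝ u) x).le_opNorm₂ (bv i) (bv j)
  rwa [norm_bv, norm_bv, mul_one, mul_one] at this

set_option maxHeartbeats 2000000 in
lemma absorb (lam M : ℝ) (hlam : 0 < lam) (hM : 0 < M) :
    ∃ C : ℝ, 0 < C ∧ ∀ (a : E3 → Fin 3 → Fin 3 → ℝ) (b : E3 → Fin 3 → ℝ) (f u : E3 → ℝ)
      (x0 : E3) (r S Hf : ℝ), 0 < r → r ≤ 1 → 0 ≤ Hf → ContDiff ℝ 2 u →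
      (∀ x ∈ closedBall x0 r, ∀ i j, a x i j = a x j i) →
      (∀ x ∈ closedBall x0 r, ∀ i j, |a x i j| ≤ M) →
      (∀ x ∈ closedBall x0 r, ∀ j, |b x j| ≤ M) →
      (∀ x ∈ closedBall x0 r, ∀ ξ : Fin 3 → ℝ,
        lam * (∑ i, ξ i ^ 2) ≤ ∑ i, ∑ j, a x i j * ξ i * ξ j) →
      (∀ x ∈ closedBall x0 r, ∀ y ∈ closedBall x0 r, ∀ i j, |a x i j - a y i j| ≤ M * ‖x - y‖) →
      (∀ x ∈ closedBall x0 r, ∀ y ∈ closedBall x0 r, ∀ j, |b x j - b y j| ≤ M * ‖x - y‖) →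
      (∀ x ∈ closedBall x0 r, ∀ y ∈ closedBall x0 r, |f x - f y| ≤ Hf * ‖x - y‖) →
      (∀ x ∈ closedBall x0 r, |u x| ≤ S) →
      (∀ x ∈ closedBall x0 r, ∑ i, ∑ j, a x i j * dd (bv i) (dd (bv j) u) x +
        ∑ j, b x j * dd (bv j) u x = f x) →
      r ^ 2 * ‖fderiv ℝ (fderiv ℝ u) x0‖ ≤ C * (S + Hf * r ^ 3) ∧
      r * ‖fderiv ℝ u x0‖ ≤ C * (S + Hf * r ^ 3) := by
  obtain ⟨Cc, hCc, hcore⟩ := core lam M hlam hM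
  set θ : ℝ := 1 / (4 + 120 * M * Cc) with hθ
  have hθ0 : 0 < θ := by positivity
  have hθ4 : θ ≤ 1 / 4 := by
    rw [hθ]; apply one_div_le_one_div_of_le (by norm_num); have := mul_pos hM hCc; linarith
  have hθM : Cc * (60 * M * θ) ≤ 1 / 2 := by
    have h1 : θ * (4 + 120 * M * Cc) = 1 := by rw [hθ]; field_simp
    nlinarith
  set C1 : ℝ := 2 * Cc * (1 / θ ^ 2 + 6 * M + 1) with hC1
  have hC1p : 0 < C1 := by positivity
  refine ⟨4 + 2 * C1, by positivity, ?_⟩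
  intro a b f u x0 r S Hf hr hr1 hHf hu asym ab bb ael alip blip flip hS heq
  have hx0 : x0 ∈ closedBall x0 r := mem_closedBall_self hr.le
  have hS0 : 0 ≤ S := (abs_nonneg _).trans (hS x0 hx0)
  have D2c : Continuous (fderiv ℝ (fderiv ℝ u)) :=
    (hu.fderiv_right (m := 1) (by norm_num)).continuous_fderiv (by norm_num)
  have cfun : Continuous (fun x : E3 => (r - ‖x - x0‖) ^ 2 * ‖fderiv ℝ (fderiv ℝ u) x‖) := by
    have c1 : Continuous (fun x : E3 => ‖fderiv ℝ (fderiv ℝ u) x‖) := by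
      have h := (continuous_norm (E := E3 →L[ℝ] E3 →L[ℝ] ℝ)).comp D2c
      exact h
    have c2 : Continuous (fun x : E3 => (r - ‖x - x0‖) ^ 2) := by fun_prop
    exact Continuous.mul c2 c1
  obtain ⟨xs, hxs, hmax⟩ := (isCompact_closedBall x0 r).exists_isMaxOn ⟨x0, hx0⟩
    (f := fun x => (r - ‖x - x0‖) ^ 2 * ‖fderiv ℝ (fderiv ℝ u) x‖)
    cfun.continuousOn
  set N := (r - ‖xs - x0‖) ^ 2 * ‖fderiv ℝ (fderiv ℝ u) xs‖ with hN
  have hN0 : 0 ≤ N := by positivity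
  have hmax' : ∀ x ∈ closedBall x0 r, (r - ‖x - x0‖) ^ 2 * ‖fderiv ℝ (fderiv ℝ u) x‖ ≤ N :=
    fun x hx => hmax hx
  have hNd : ∀ d > 0, ∀ x ∈ closedBall x0 r, d / 2 ≤ r - ‖x - x0‖ →
      ‖fderiv ℝ (fderiv ℝ u) x‖ ≤ 4 * N / d ^ 2 := by
    intro d hd x hx hdx
    rw [le_div_iff₀ (by positivity)]
    have h1 := hmax' x hx
    have h2 : (d / 2) ^ 2 ≤ (r - ‖x - x0‖) ^ 2 := pow_le_pow_left₀ (by positivity) hdx 2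
    have h3 := mul_le_mul_of_nonneg_right h2 (norm_nonneg (fderiv ℝ (fderiv ℝ u) x))
    nlinarith
  have main : N ≤ C1 * (S + Hf * r ^ 3) := by
    set d := r - ‖xs - x0‖ with hd
    have hxs' : ‖xs - x0‖ ≤ r := by rwa [mem_closedBall, dist_eq_norm] at hxs
    rcases (sub_nonneg.2 hxs').eq_or_lt with h0 | hdpos
    · rw [hN, hd, ← h0]; simp; positivity
    have hdr : d ≤ r := by rw [hd]; linarith [norm_nonneg (xs - x0)]
    change 0 < d at hdpos
    set ρ := θ * d with hρ
    have hρ0 : 0 < ρ := by positivity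
    have hρd : ρ ≤ d / 4 := by rw [hρ]; nlinarith
    set N2 := 4 * N / d ^ 2 with hN2
    have hN20 : 0 ≤ N2 := by positivity
    have far : ∀ y ∈ closedBall xs (2 * ρ), y ∈ closedBall x0 r ∧ d / 2 ≤ r - ‖y - x0‖ := by
      intro y hy
      rw [mem_closedBall, dist_eq_norm] at hy
      have : ‖y - x0‖ ≤ ‖y - xs‖ + ‖xs - x0‖ := norm_sub_le_norm_sub_add_norm_sub _ _ _
      have h2 : d / 2 ≤ r - ‖y - x0‖ := by linarith
      refine ⟨?_, h2⟩
      rw [mem_closedBall, dist_eq_norm]; linarith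
    have D2b : ∀ y ∈ closedBall xs (2 * ρ), ‖fderiv ℝ (fderiv ℝ u) y‖ ≤ N2 := fun y hy =>
      hNd d hdpos y (far y hy).1 (far y hy).2
    set D1 := 2 * S / ρ + N2 * ρ with hD1
    have hD10 : 0 ≤ D1 := by positivity
    have sub1 : closedBall xs ρ ⊆ closedBall xs (2 * ρ) := closedBall_subset_closedBall (by linarith)
    have D1b : ∀ y ∈ closedBall xs ρ, ‖fderiv ℝ u y‖ ≤ D1 := by
      intro y hy
      have sub2 : closedBall y ρ ⊆ closedBall xs (2 * ρ) := by
        apply closedBall_subset_closedBall'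
        rw [mem_closedBall] at hy; linarith
      exact interp hu hρ0 (fun z hz => hS z (far z (sub2 hz)).1) (fun z hz => D2b z (sub2 hz))
    set H := Hf + 3 * M * D1 + 12 * M * N2 with hH
    have hH0 : 0 ≤ H := by positivity
    have xsm : xs ∈ closedBall xs ρ := mem_closedBall_self hρ0.le
    have est := hcore (a xs) u xs ρ S H (f xs - ∑ j, b xs j * dd (bv j) u xs)
      (asym xs hxs) (ab xs hxs) (ael xs hxs) hu hρ0 hH0
      (fun y hy => hS y (far y (sub1 hy)).1) (by
        intro y hy
        have hyB := (far y (sub1 hy)).1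
        have ey := heq y hyB
        set δ := ‖y - xs‖ with hδ
        have e1 : ∑ i, ∑ j, a xs i j * dd (bv i) (dd (bv j) u) y -
            (f xs - ∑ j, b xs j * dd (bv j) u xs) = (f y - f xs) +
            (∑ i, ∑ j, (a xs i j - a y i j) * dd (bv i) (dd (bv j) u) y) -
            ∑ j, ((b y j - b xs j) * dd (bv j) u y +
              b xs j * (dd (bv j) u y - dd (bv j) u xs)) := by
          rw [← ey]
          simp only [sub_mul, mul_sub, Finset.sum_add_distrib, Finset.sum_sub_distrib]
          ring
        have e2 : |∑ i, ∑ j, (a xs i j - a y i j) * dd (bv i) (dd (bv j) u) y| ≤ 9 * M * N2 * δ := by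
          calc _ ≤ ∑ i, |∑ j, (a xs i j - a y i j) * dd (bv i) (dd (bv j) u) y| :=
                Finset.abs_sum_le_sum_abs _ _
            _ ≤ ∑ i : Fin 3, ∑ j : Fin 3, (M * δ) * N2 := by
                refine Finset.sum_le_sum fun i _ => (Finset.abs_sum_le_sum_abs _ _).trans ?_
                refine Finset.sum_le_sum fun j _ => ?_
                rw [abs_mul]
                refine mul_le_mul ?_ ((abs_dd2_le hu i j y).trans (D2b y (sub1 hy)))
                  (abs_nonneg _) (by positivity)
                rw [hδ, norm_sub_rev]
                exact alip xs hxs y hyB i j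
            _ = _ := by simp; ring
        have e3 : |∑ j, ((b y j - b xs j) * dd (bv j) u y +
              b xs j * (dd (bv j) u y - dd (bv j) u xs))| ≤ 3 * M * (D1 + N2) * δ := by
          calc _ ≤ ∑ j, |(b y j - b xs j) * dd (bv j) u y +
              b xs j * (dd (bv j) u y - dd (bv j) u xs)| := Finset.abs_sum_le_sum_abs _ _
            _ ≤ ∑ j : Fin 3, ((M * δ) * D1 + M * (N2 * δ)) := by
                refine Finset.sum_le_sum fun j _ => (abs_add_le _ _).trans ?_
                rw [abs_mul, abs_mul]
                refine add_le_add (mul_le_mul (blip y hyB xs hxs j)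
                  ((abs_dd_le u j y).trans (D1b y hy)) (abs_nonneg _) (by positivity))
                  (mul_le_mul (bb xs hxs j) ?_ (abs_nonneg _) hM.le)
                have l1 := lip_D hu (convex_closedBall xs (2 * ρ)) D2b (sub1 xsm) (sub1 hy)
                refine le_trans ?_ l1
                have l2 := (fderiv ℝ u y - fderiv ℝ u xs).le_opNorm (bv j)
                rwa [norm_bv, mul_one] at l2
            _ = _ := by simp; ring
        rw [e1]
        have e4 := flip y hyB xs hxs
        have t1 := abs_sub ((f y - f xs) +
            (∑ i, ∑ j, (a xs i j - a y i j) * dd (bv i) (dd (bv j) u) y))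
            (∑ j, ((b y j - b xs j) * dd (bv j) u y +
              b xs j * (dd (bv j) u y - dd (bv j) u xs)))
        have t2 := abs_add_le (f y - f xs)
            (∑ i, ∑ j, (a xs i j - a y i j) * dd (bv i) (dd (bv j) u) y)
        have e5 : H * δ = Hf * δ + 9 * M * N2 * δ + 3 * M * (D1 + N2) * δ := by rw [hH]; ring
        rw [e5]
        linarith)
    have hN' : N ≤ d ^ 2 * (Cc * (S / ρ ^ 2 + H * ρ)) := by
      rw [hN]; gcongr
    have e6 : d ^ 2 * (Cc * (S / ρ ^ 2 + H * ρ)) = Cc * (S / θ ^ 2 + (θ * d ^ 3 * Hf +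
        6 * M * d ^ 2 * S + 12 * M * θ * (θ * d ^ 2) * N + 48 * M * θ * d * N)) := by
      rw [hH, hD1, hN2, hρ]
      field_simp
      ring
    have hd1 : d ≤ 1 := hdr.trans hr1
    have hθ1 : θ ≤ 1 := by linarith
    have b1 : θ * d ^ 3 * Hf ≤ Hf * r ^ 3 := by
      calc θ * d ^ 3 * Hf ≤ 1 * r ^ 3 * Hf := by gcongr
        _ = _ := by ring
    have b2 : 6 * M * d ^ 2 * S ≤ 6 * M * 1 ^ 2 * S := by gcongr
    have b3 : 12 * M * θ * (θ * d ^ 2) * N ≤ 12 * M * θ * (1 * 1 ^ 2) * N := by gcongr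
    have b4 : 48 * M * θ * d * N ≤ 48 * M * θ * 1 * N := by gcongr
    have b5 : N ≤ Cc * (S / θ ^ 2 + (Hf * r ^ 3 + 6 * M * S)) + Cc * (60 * M * θ) * N := by
      rw [e6] at hN'
      refine hN'.trans ?_
      have : Cc * (S / θ ^ 2 + (Hf * r ^ 3 + 6 * M * S)) + Cc * (60 * M * θ) * N =
        Cc * (S / θ ^ 2 + (Hf * r ^ 3 + 6 * M * 1 ^ 2 * S + 12 * M * θ * (1 * 1 ^ 2) * N +
          48 * M * θ * 1 * N)) := by ring
      rw [this]
      gcongr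
    have b6 : Cc * (60 * M * θ) * N ≤ 1 / 2 * N := by gcongr
    have b7 : N ≤ 2 * Cc * (S / θ ^ 2 + (Hf * r ^ 3 + 6 * M * S)) := by linarith
    refine b7.trans ?_
    rw [hC1]
    have : 0 ≤ 2 * Cc * (S + (1 / θ ^ 2 + 6 * M) * (Hf * r ^ 3)) := by positivity
    have e7 : 2 * Cc * (1 / θ ^ 2 + 6 * M + 1) * (S + Hf * r ^ 3) =
      2 * Cc * (S / θ ^ 2 + (Hf * r ^ 3 + 6 * M * S)) +
      2 * Cc * (S + (1 / θ ^ 2 + 6 * M) * (Hf * r ^ 3)) := by ring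
    linarith
  have hY : 0 ≤ S + Hf * r ^ 3 := by positivity
  have c1 : r ^ 2 * ‖fderiv ℝ (fderiv ℝ u) x0‖ ≤ N := by
    have := hmax' x0 hx0
    simpa using this
  have c2 := interp hu (y := x0) (h := r / 2) (S := S) (N := 4 * N / r ^ 2) (by positivity)
    (fun z hz => hS z (closedBall_subset_closedBall (by linarith) hz))
    (fun z hz => hNd r hr z (closedBall_subset_closedBall (by linarith) hz) (by
      rw [mem_closedBall, dist_eq_norm] at hz; linarith))
  refine ⟨c1.trans (main.trans ?_), ?_⟩
  · gcongr; linarith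
  · calc r * ‖fderiv ℝ u x0‖ ≤ r * (2 * S / (r / 2) + 4 * N / r ^ 2 * (r / 2)) := by gcongr
      _ = 4 * S + 2 * N := by field_simp; ring
      _ ≤ 4 * (S + Hf * r ^ 3) + 2 * (C1 * (S + Hf * r ^ 3)) := by
          have : 0 ≤ Hf * r ^ 3 := by positivity
          linarith
      _ = _ := by ring


lemma cutoff {e : E3 → ℝ} {x : E3} {r : ℝ} (hr : 0 < r)
    (he : ContDiffOn ℝ 2 e (ball x (2 * r))) :
    ∃ u : E3 → ℝ, ContDiff ℝ 2 u ∧ ∀ y ∈ closedBall x r, u =ᶠ[𝓝 y] e := by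
  let χ : ContDiffBump x := ⟨5 * r / 4, 3 * r / 2, by positivity, by linarith⟩
  refine ⟨fun y => χ y * e y, ?_, ?_⟩
  · rw [contDiff_iff_contDiffAt]
    intro y
    by_cases hy : y ∈ ball x (2 * r)
    · exact (χ.contDiff.contDiffAt).mul (he.contDiffAt (isOpen_ball.mem_nhds hy))
    · have h1 : y ∈ (closedBall x (3 * r / 2))ᶜ := by
        intro h
        rw [mem_closedBall] at h
        rw [mem_ball] at hy
        linarith
      have h2 : (fun y => χ y * e y) =ᶠ[𝓝 y] fun _ => 0 := by
        filter_upwards [isClosed_closedBall.isOpen_compl.mem_nhds h1] with z hz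
        have : χ z = 0 := by
          apply χ.zero_of_le_dist
          have hz' : ¬ dist z x ≤ 3 * r / 2 := hz
          exact (not_le.1 hz').le
        simp [this]
      exact contDiffAt_const.congr_of_eventuallyEq h2
  · intro y hy
    have : y ∈ ball x (5 * r / 4) := by
      rw [mem_closedBall] at hy; rw [mem_ball]; linarith
    filter_upwards [isOpen_ball.mem_nhds this] with z hz
    have : χ z = 1 := χ.one_of_mem_closedBall (ball_subset_closedBall hz)
    simp [this]

lemma coef_bounds {g : E3 → ℝ} {M : ℝ} (hg : ContDiffOn ℝ 2 g (ball (0 : E3) 1))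
    (h : ∀ n ≤ 2, ∀ x ∈ ball (0 : E3) 1,
        ‖iteratedFDerivWithin ℝ n g (ball (0 : E3) 1) x‖ ≤ M) :
    (∀ x ∈ ball (0 : E3) 1, |g x| ≤ M) ∧
    (∀ x ∈ ball (0 : E3) 1, ‖fderiv ℝ g x‖ ≤ M) ∧
    (∀ x ∈ ball (0 : E3) 1, ∀ y ∈ ball (0 : E3) 1, |g x - g y| ≤ M * ‖x - y‖) ∧
    (∀ x ∈ ball (0 : E3) 1, ∀ y ∈ ball (0 : E3) 1,
      ‖fderiv ℝ g x - fderiv ℝ g y‖ ≤ M * ‖x - y‖) := by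
  have h' : ∀ n ≤ 2, ∀ x ∈ ball (0 : E3) 1, ‖iteratedFDeriv ℝ n g x‖ ≤ M := by
    intro n hn x hx
    rw [← iteratedFDerivWithin_of_isOpen n isOpen_ball hx]
    exact h n hn x hx
  have d1 : ∀ x ∈ ball (0 : E3) 1, ‖fderiv ℝ g x‖ ≤ M := fun x hx => by
    have := h' 1 (by norm_num) x hx
    rwa [norm_iteratedFDeriv_one] at this
  have d2 : ∀ x ∈ ball (0 : E3) 1, ‖fderiv ℝ (fderiv ℝ g) x‖ ≤ M := fun x hx => by
    have := h' 2 (by norm_num) x hx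
    rwa [← norm_iteratedFDeriv_fderiv, norm_iteratedFDeriv_one] at this
  have cd : ∀ x ∈ ball (0 : E3) 1, ContDiffAt ℝ 2 g x := fun x hx =>
    hg.contDiffAt (isOpen_ball.mem_nhds hx)
  refine ⟨fun x hx => ?_, d1, fun x hx y hy => ?_, fun x hx y hy => ?_⟩
  · have := h' 0 (by norm_num) x hx
    rwa [norm_iteratedFDeriv_zero, Real.norm_eq_abs] at this
  · exact (convex_ball (0 : E3) 1).norm_image_sub_le_of_norm_fderiv_le (𝕜 := ℝ)
      (fun z hz => (cd z hz).differentiableAt (by norm_num)) d1 hy hx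
  · exact (convex_ball (0 : E3) 1).norm_image_sub_le_of_norm_fderiv_le (𝕜 := ℝ)
      (fun z hz => ((cd z hz).fderiv_right (m := 1) (by norm_num)).differentiableAt (by norm_num))
      d2 hy hx

lemma norm_hess (e : E3 → ℝ) (x : E3) :
    ‖iteratedFDeriv ℝ 2 e x‖ = ‖fderiv ℝ (fderiv ℝ e) x‖ := by
  rw [← norm_iteratedFDeriv_fderiv, norm_iteratedFDeriv_one]

lemma norm_grad (e : E3 → ℝ) (x : E3) : ‖gradient e x‖ = ‖fderiv ℝ e x‖ := by
  unfold gradient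
  exact LinearIsometryEquiv.norm_map _ _

lemma prod_deriv {g e : E3 → ℝ} {x : E3} (hg : DifferentiableAt ℝ g x)
    (he : ContDiffAt ℝ 2 e x) (v w : E3) :
    fderiv ℝ (fun y => g y * fderiv ℝ e y w) x v =
      g x * dd v (dd w e) x + fderiv ℝ g x v * dd w e x := by
  have h1 : DifferentiableAt ℝ (fun y => fderiv ℝ e y w) x :=
    ((he.fderiv_right (m := 1) (by norm_num)).differentiableAt (by norm_num)).clm_apply
      (differentiableAt_const w)
  rw [fderiv_fun_mul hg h1]
  change g x * fderiv ℝ (dd w e) x v + dd w e x * fderiv ℝ g x v =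
    g x * fderiv ℝ (dd w e) x v + fderiv ℝ g x v * dd w e x
  ring

lemma flip_lemma {f : E3 → ℝ} {K r : ℝ} {x : E3} (hr : 0 < r)
    (hs : closedBall x r ⊆ ball (0 : E3) 1 \ {0})
    (hlow : ∀ y ∈ closedBall x r, r ≤ ‖y‖) (hK : 0 < K)
    (hf : ContDiffOn ℝ 1 f (ball (0 : E3) 1 \ {0}))
    (hb : ∀ x ∈ ball (0 : E3) 1 \ {0}, ‖fderiv ℝ f x‖ ≤ K * ‖x‖⁻¹ ^ 2) :
    ∀ y ∈ closedBall x r, ∀ z ∈ closedBall x r, |f y - f z| ≤ K / r ^ 2 * ‖y - z‖ := by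
  intro y hy z hz
  have ho : IsOpen (ball (0 : E3) 1 \ {0}) := isOpen_ball.sdiff isClosed_singleton
  refine (convex_closedBall x r).norm_image_sub_le_of_norm_fderiv_le (𝕜 := ℝ)
      (fun w hw => (hf.contDiffAt (ho.mem_nhds (hs hw))).differentiableAt (by norm_num))
      (fun w hw => (hb w (hs hw)).trans ?_) hz hy
  have := hlow w hw
  rw [inv_pow, ← div_eq_mul_inv]
  gcongr

/-- derivative estimates for the Green's function remainder. Fix
`τ ∈ (0,1)`, ellipticity constants `0 < λ ≤ Λ`, and `K, M > 0`. There are `C > 0` and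
`r₁ ∈ (0,1)`, depending only on these constants, such that: if `a` is a `C²` symmetric
uniformly elliptic matrix field on the unit ball `B` with `C²`-norm at most `M`, `e` is
continuous on `B` and `C²` on `B ∖ {0}` with `Σ_{i,j} ∂_i(a^{ij}∂_j e) = f` on `B ∖ {0}`
where `|f| ≤ K|x|⁻¹`, `|∇f| ≤ K|x|⁻²`, and `|e(x) − e(0)| ≤ K|x|^{1−τ}`, then
`|∇e(x)| ≤ C|x|^{−τ}` and `|∇²e(x)| ≤ C|x|^{−1−τ}` for `0 < |x| ≤ r₁`. -/
theorem stmt_11 (τ lam Lam K M : ℝ) (hτ0 : 0 < τ) (hτ1 : τ < 1)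
    (hlam : 0 < lam) (hlamLam : lam ≤ Lam) (hK : 0 < K) (hM : 0 < M) :
    ∃ C r₁ : ℝ, 0 < C ∧ 0 < r₁ ∧ r₁ < 1 ∧
    ∀ (a : E3 → Fin 3 → Fin 3 → ℝ) (e f : E3 → ℝ),
      (∀ i j, ContDiffOn ℝ 2 (fun y => a y i j) (ball (0 : E3) 1)) →
      (∀ i j, ∀ n ≤ 2, ∀ x ∈ ball (0 : E3) 1,
        ‖iteratedFDerivWithin ℝ n (fun y => a y i j) (ball (0 : E3) 1) x‖ ≤ M) →
      (∀ x ∈ ball (0 : E3) 1, ∀ i j, a x i j = a x j i) →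
      (∀ x ∈ ball (0 : E3) 1, ∀ ξ : Fin 3 → ℝ,
        lam * (∑ i, ξ i ^ 2) ≤ ∑ i, ∑ j, a x i j * ξ i * ξ j ∧
        (∑ i, ∑ j, a x i j * ξ i * ξ j) ≤ Lam * (∑ i, ξ i ^ 2)) →
      ContinuousOn e (ball (0 : E3) 1) →
      ContDiffOn ℝ 2 e (ball (0 : E3) 1 \ {0}) →
      ContDiffOn ℝ 1 f (ball (0 : E3) 1 \ {0}) →
      (∀ x ∈ ball (0 : E3) 1 \ {0},
        |f x| ≤ K * ‖x‖⁻¹ ∧ ‖fderiv ℝ f x‖ ≤ K * ‖x‖⁻¹ ^ 2) →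
      (∀ x ∈ ball (0 : E3) 1 \ ({0} : Set E3),
        (∑ i, ∑ j, fderiv ℝ
            (fun y => a y i j * fderiv ℝ e y (EuclideanSpace.single j 1))
            x (EuclideanSpace.single i 1)) = f x) →
      (∀ x ∈ ball (0 : E3) 1, |e x - e 0| ≤ K * ‖x‖ ^ (1 - τ)) →
      ∀ x : E3, 0 < ‖x‖ → ‖x‖ ≤ r₁ →
        ‖gradient e x‖ ≤ C * ‖x‖ ^ (-τ) ∧
        ‖iteratedFDeriv ℝ 2 e x‖ ≤ C * ‖x‖ ^ (-(1 + τ)) := by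
  obtain ⟨C, hC, habs⟩ := absorb lam (3 * M) hlam (by positivity)
  refine ⟨12 * C * K, 1 / 2, by positivity, by norm_num, by norm_num, ?_⟩
  intro a e f ha haM asym ael _ he hf hfb heq hgrow x hx hx2
  have ho : IsOpen (ball (0 : E3) 1 \ {0}) := isOpen_ball.sdiff isClosed_singleton
  set s := ‖x‖ with hs
  set r := s / 2 with hr
  have hr0 : 0 < r := by positivity
  have nlow : ∀ y, s - dist y x ≤ ‖y‖ := fun y => by
    have := norm_sub_norm_le x y
    rw [dist_eq_norm, norm_sub_rev]; linarith
  have nup : ∀ y, ‖y‖ ≤ s + dist y x := fun y => by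
    have := norm_sub_norm_le y x
    rw [dist_eq_norm]; linarith
  have sub2 : ball x (2 * r) ⊆ ball (0 : E3) 1 \ {0} := by
    intro y hy
    rw [mem_ball] at hy
    have h1 := nlow y
    have h2 := nup y
    refine ⟨by rw [mem_ball_zero_iff]; linarith, ?_⟩
    intro h0
    rw [mem_singleton_iff] at h0
    rw [h0, norm_zero, ← h0] at h1
    linarith
  have sub1 : closedBall x r ⊆ ball (0 : E3) 1 \ {0} :=
    (closedBall_subset_ball (by linarith)).trans sub2
  have sub0 : closedBall x r ⊆ ball (0 : E3) 1 := sub1.trans sdiff_subset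
  have hlow : ∀ y ∈ closedBall x r, r ≤ ‖y‖ := fun y hy => by
    rw [mem_closedBall] at hy; have := nlow y; linarith
  have hup : ∀ y ∈ closedBall x r, ‖y‖ ≤ 3 * r := fun y hy => by
    rw [mem_closedBall] at hy; have := nup y; linarith
  obtain ⟨u, hu, hue⟩ := cutoff (e := fun y => e y - e 0) hr0
    ((he.mono sub2).sub contDiffOn_const)
  have hue1 : ∀ y ∈ closedBall x r, fderiv ℝ u =ᶠ[𝓝 y] fderiv ℝ e := fun y hy => by
    have := (hue y hy).fderiv (𝕜 := ℝ)
    refine this.trans (Eventually.of_forall fun z => ?_)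
    exact fderiv_sub_const _
  have cb := fun i j => coef_bounds (ha i j) (haM i j)
  set b : E3 → Fin 3 → ℝ := fun y j => ∑ i, fderiv ℝ (fun z => a z i j) y (bv i) with hb
  set p := s ^ (1 - τ) with hp
  have hp0 : 0 < p := Real.rpow_pos_of_pos hx _
  have key := habs a b f u x r (2 * K * p) (K / r ^ 2) hr0 (by linarith) (by positivity) hu
    (fun y hy => asym y (sub0 hy))
    (fun y hy i j => ((cb i j).1 y (sub0 hy)).trans (by linarith))
    (fun y hy j => by
      calc |b y j| ≤ ∑ i, |fderiv ℝ (fun z => a z i j) y (bv i)| := Finset.abs_sum_le_sum_abs _ _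
        _ ≤ ∑ i : Fin 3, M := Finset.sum_le_sum fun i _ => by
            have := (fderiv ℝ (fun z => a z i j) y).le_opNorm (bv i)
            rw [norm_bv, mul_one] at this
            exact this.trans ((cb i j).2.1 y (sub0 hy))
        _ = 3 * M := by simp)
    (fun y hy ξ => (ael y (sub0 hy) ξ).1)
    (fun y hy z hz i j => ((cb i j).2.2.1 y (sub0 hy) z (sub0 hz)).trans (by
      gcongr; linarith))
    (fun y hy z hz j => by
      calc |b y j - b z j| = |∑ i, (fderiv ℝ (fun z => a z i j) y -
              fderiv ℝ (fun z => a z i j) z) (bv i)| := by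
            simp [hb, Finset.sum_sub_distrib]
        _ ≤ ∑ i, |(fderiv ℝ (fun z => a z i j) y -
              fderiv ℝ (fun z => a z i j) z) (bv i)| := Finset.abs_sum_le_sum_abs _ _
        _ ≤ ∑ i : Fin 3, M * ‖y - z‖ := Finset.sum_le_sum fun i _ => by
            have := (fderiv ℝ (fun z => a z i j) y -
              fderiv ℝ (fun z => a z i j) z).le_opNorm (bv i)
            rw [norm_bv, mul_one] at this
            exact this.trans ((cb i j).2.2.2 y (sub0 hy) z (sub0 hz))
        _ = 3 * M * ‖y - z‖ := by simp; ring)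
    (flip_lemma hr0 sub1 hlow hK hf (fun y hy => (hfb y hy).2))
    (fun y hy => by
      rw [(hue y hy).eq_of_nhds]
      refine (hgrow y (sub0 hy)).trans ?_
      have h1 : ‖y‖ ^ (1 - τ) ≤ (2 * s) ^ (1 - τ) :=
        Real.rpow_le_rpow (norm_nonneg _) (by have := hup y hy; linarith) (by linarith)
      rw [Real.mul_rpow (by norm_num) hx.le] at h1
      have h2 : (2 : ℝ) ^ (1 - τ) ≤ 2 := by
        calc (2 : ℝ) ^ (1 - τ) ≤ 2 ^ (1 : ℝ) :=
              Real.rpow_le_rpow_of_exponent_le (by norm_num) (by linarith)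
          _ = 2 := by simp
      calc K * ‖y‖ ^ (1 - τ) ≤ K * (2 * p) := by
            gcongr
            exact h1.trans (by gcongr)
        _ = _ := by ring)
    (fun y hy => by
      have hyc := (he.contDiffAt (ho.mem_nhds (sub1 hy)))
      rw [← heq y (sub1 hy)]
      have q1 : ∀ j, dd (bv j) u y = dd (bv j) e y := fun j => by
        simp only [dd]; rw [(hue1 y hy).eq_of_nhds]
      have q2 : ∀ i j, dd (bv i) (dd (bv j) u) y = dd (bv i) (dd (bv j) e) y := fun i j => by
        have : dd (bv j) u =ᶠ[𝓝 y] dd (bv j) e := by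
          filter_upwards [hue1 y hy] with z hz
          simp only [dd]; rw [hz]
        have h3 := this.fderiv_eq (𝕜 := ℝ)
        change fderiv ℝ (dd (bv j) u) y (bv i) = fderiv ℝ (dd (bv j) e) y (bv i)
        rw [h3]
      have q3 : ∀ i j, fderiv ℝ
            (fun y => a y i j * fderiv ℝ e y (EuclideanSpace.single j 1))
            y (EuclideanSpace.single i 1) = a y i j * dd (bv i) (dd (bv j) e) y +
              fderiv ℝ (fun z => a z i j) y (bv i) * dd (bv j) e y := fun i j =>
        prod_deriv (g := fun z => a z i j)
          (((ha i j).contDiffAt (isOpen_ball.mem_nhds (sub0 hy))).differentiableAt (by norm_num))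
          hyc (bv i) (bv j)
      simp only [q1, q2, q3, Finset.sum_add_distrib]
      congr 1
      rw [Finset.sum_comm]
      simp only [hb, Finset.sum_mul])
  have xm : x ∈ closedBall x r := mem_closedBall_self hr0.le
  rw [(hue1 x xm).eq_of_nhds, (hue1 x xm).fderiv_eq] at key
  rw [norm_grad, norm_hess]
  have sp : s ≤ p := by
    calc s = s ^ (1 : ℝ) := by simp
      _ ≤ p := Real.rpow_le_rpow_of_exponent_ge hx (by linarith) (by linarith)
  have tot : C * (2 * K * p + K / r ^ 2 * r ^ 3) ≤ 3 * C * K * p := by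
    have : K / r ^ 2 * r ^ 3 = K * r := by field_simp
    rw [this]
    have : K * r ≤ K * p := by gcongr; linarith
    nlinarith
  have p1 : p = s * s ^ (-τ) := by
    rw [hp, sub_eq_add_neg, Real.rpow_add hx, Real.rpow_one]
  have p2 : p = s ^ 2 * s ^ (-(1 + τ)) := by
    rw [hp, ← Real.rpow_natCast, ← Real.rpow_add hx]; congr 1; push_cast; ring
  obtain ⟨k2, k1⟩ := key
  have k1 := k1.trans tot
  have k2 := k2.trans tot
  constructor
  · rw [p1] at k1
    have t0 : 0 < s ^ (-τ) := Real.rpow_pos_of_pos hx _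
    have : s * ‖fderiv ℝ e x‖ ≤ s * (12 * C * K * s ^ (-τ)) := by
      have : 0 ≤ C * K * (s * s ^ (-τ)) := by positivity
      rw [hr] at k1
      linarith
    exact le_of_mul_le_mul_left this hx
  · rw [p2] at k2
    have : s ^ 2 * ‖fderiv ℝ (fderiv ℝ e) x‖ ≤ s ^ 2 * (12 * C * K * s ^ (-(1 + τ))) := by
      rw [hr] at k2
      linarith
    exact le_of_mul_le_mul_left this (by positivity)
end
end

section
/- Let n ≥ 3 and let B be the open unit ball in ℝⁿ. Define φ₀ : B → ℝ by φ₀(x) = 1 − |x|⁴ / (4(n+2)), so that Δφ₀(x) = −|x|² (Δ the Euclidean Laplacian). Then there exist constants C ≥ 1, c > 0 and ε₀ ∈ (0, 1], depending only on n, such that for every ε ∈ (0, ε₀] there is a smooth function φ : B → ℝ with sup_{x ∈ B} |φ(x) − φ₀(x)| ≤ C ε and Δφ(x) ≤ −c ε^{1/2} for every x ∈ B. -/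
open Metric Set
open scoped BigOperators

noncomputable section

/-- Laplacian of a radial function `F (‖x‖ ^ 2)`. -/
lemma radial_laplacian (n : ℕ) (F G H : ℝ → ℝ)
    (h1 : ∀ s, 0 ≤ s → HasDerivAt F (G s) s) (h2 : ∀ s, 0 ≤ s → HasDerivAt G (H s) s)
    (x : EuclideanSpace ℝ (Fin n)) :
    (∑ i, fderiv ℝ (fun y => fderiv ℝ (fun z : EuclideanSpace ℝ (Fin n) => F (‖z‖ ^ 2)) y
      (EuclideanSpace.single i 1)) x (EuclideanSpace.single i 1))
      = 4 * ‖x‖ ^ 2 * H (‖x‖ ^ 2) + 2 * n * G (‖x‖ ^ 2) := by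
  have hN : ∀ y : EuclideanSpace ℝ (Fin n),
      HasFDerivAt (fun z : EuclideanSpace ℝ (Fin n) => ‖z‖ ^ 2) (2 • innerSL ℝ y) y :=
    fun y => (hasStrictFDerivAt_norm_sq y).hasFDerivAt
  have key : ∀ i : Fin n, (fun y => fderiv ℝ (fun z : EuclideanSpace ℝ (Fin n) => F (‖z‖ ^ 2)) y
      (EuclideanSpace.single i 1)) = fun y => G (‖y‖ ^ 2) * (2 * y i) := by
    intro i
    funext y
    have := (h1 (‖y‖ ^ 2) (by positivity)).comp_hasFDerivAt y (hN y)
    rw [show (fun z : EuclideanSpace ℝ (Fin n) => F (‖z‖ ^ 2)) = F ∘ fun z => ‖z‖ ^ 2 from rfl,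
      this.fderiv]
    simp [EuclideanSpace.inner_single_right]
  have key2 : ∀ i : Fin n, fderiv ℝ (fun y => fderiv ℝ
      (fun z : EuclideanSpace ℝ (Fin n) => F (‖z‖ ^ 2)) y
      (EuclideanSpace.single i 1)) x (EuclideanSpace.single i 1)
      = 4 * H (‖x‖ ^ 2) * (x i) ^ 2 + 2 * G (‖x‖ ^ 2) := by
    intro i
    rw [key i]
    have a := (h2 (‖x‖ ^ 2) (by positivity)).comp_hasFDerivAt x (hN x)
    have b : HasFDerivAt (fun y : EuclideanSpace ℝ (Fin n) => 2 * y i)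
        ((2 : ℝ) • (EuclideanSpace.proj i : EuclideanSpace ℝ (Fin n) →L[ℝ] ℝ)) x :=
      ((EuclideanSpace.proj i : EuclideanSpace ℝ (Fin n) →L[ℝ] ℝ).hasFDerivAt).const_mul 2
    have c := a.mul b
    have cc : HasFDerivAt (fun y : EuclideanSpace ℝ (Fin n) => G (‖y‖ ^ 2) * (2 * y i)) _ x := c
    rw [cc.fderiv]
    simp [EuclideanSpace.inner_single_right]
    ring
  simp_rw [key2]
  rw [Finset.sum_add_distrib, ← Finset.mul_sum, EuclideanSpace.real_norm_sq_eq]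
  simp
  ring

/-- analytic core of the sharpness example. Let `n ≥ 3` and let
`φ₀(x) = 1 − |x|⁴/(4(n+2))` on the unit ball `B ⊂ ℝⁿ` (so `Δφ₀ = −|x|²`). There exist
`C ≥ 1`, `c > 0`, `ε₀ ∈ (0,1]`, depending only on `n`, such that for every `ε ∈ (0, ε₀]`
there is a smooth `φ : B → ℝ` with `sup_B |φ − φ₀| ≤ Cε` and `Δφ ≤ −c ε^{1/2}` on `B`,
where `Δ` is the Euclidean Laplacian `Δφ(x) = Σ_i ∂_i∂_i φ(x)`. -/
theorem stmt_16 (n : ℕ) (hn : 3 ≤ n) :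
    ∃ C c ε₀ : ℝ, 1 ≤ C ∧ 0 < c ∧ 0 < ε₀ ∧ ε₀ ≤ 1 ∧
    ∀ ε : ℝ, 0 < ε → ε ≤ ε₀ →
      ∃ φ : EuclideanSpace ℝ (Fin n) → ℝ, ContDiff ℝ (⊤ : ℕ∞) φ ∧
        (∀ x ∈ ball (0 : EuclideanSpace ℝ (Fin n)) 1,
          |φ x - (1 - ‖x‖ ^ 4 / (4 * ((n : ℝ) + 2)))| ≤ C * ε) ∧
        (∀ x ∈ ball (0 : EuclideanSpace ℝ (Fin n)) 1,
          (∑ i, fderiv ℝ (fun y => fderiv ℝ φ y (EuclideanSpace.single i 1)) x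
            (EuclideanSpace.single i 1)) ≤ -c * Real.sqrt ε) := by
  refine ⟨1, 1 / 2, 1, le_rfl, by norm_num, by norm_num, le_rfl, ?_⟩
  intro ε hε _
  obtain ⟨d, hd, hde⟩ : ∃ d : ℝ, 0 < d ∧ Real.sqrt ε = d := ⟨_, Real.sqrt_pos.2 hε, rfl⟩
  have hd2 : ε = d ^ 2 := by rw [← hde, Real.sq_sqrt hε.le]
  have hnR : (3 : ℝ) ≤ n := by exact_mod_cast hn
  refine ⟨fun x => (fun s : ℝ => 1 - s ^ 2 / (4 * ((n : ℝ) + 2)) + d ^ 3 / (d + s)) (‖x‖ ^ 2),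
    ?_, ?_, ?_⟩
  · have hq : ContDiff ℝ (⊤ : ℕ∞) (fun x : EuclideanSpace ℝ (Fin n) => ‖x‖ ^ 2) :=
      contDiff_norm_sq ℝ
    refine (contDiff_const.sub ((hq.pow 2).div_const _)).add
      (contDiff_const.div (contDiff_const.add hq) ?_)
    intro x
    positivity
  · intro x _
    have : (1 - (‖x‖ ^ 2) ^ 2 / (4 * ((n : ℝ) + 2)) + d ^ 3 / (d + ‖x‖ ^ 2)) -
      (1 - ‖x‖ ^ 4 / (4 * ((n : ℝ) + 2))) = d ^ 3 / (d + ‖x‖ ^ 2) := by ring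
    simp only []
    rw [this, abs_of_nonneg (by positivity), div_le_iff₀ (by positivity), hd2]
    nlinarith [mul_nonneg (sq_nonneg d) (sq_nonneg ‖x‖)]
  · intro x _
    refine (radial_laplacian n (fun s : ℝ => 1 - s ^ 2 / (4 * ((n : ℝ) + 2)) + d ^ 3 / (d + s))
      (fun s => -(2 * s / (4 * ((n : ℝ) + 2))) - d ^ 3 / (d + s) ^ 2)
      (fun s => -(2 / (4 * ((n : ℝ) + 2))) + 2 * d ^ 3 / (d + s) ^ 3) ?_ ?_ x).trans_le ?_
    rotate_right 1
    rw [hde]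
    · have hs : 0 ≤ ‖x‖ ^ 2 := by positivity
      generalize ‖x‖ ^ 2 = s at hs
      have hp : 0 < d + s := by positivity
      have e : 4 * s * (-(2 / (4 * ((n : ℝ) + 2))) + 2 * d ^ 3 / (d + s) ^ 3) +
          2 * n * (-(2 * s / (4 * ((n : ℝ) + 2))) - d ^ 3 / (d + s) ^ 2)
          = -s + d ^ 3 * (8 * s - 2 * n * (d + s)) / (d + s) ^ 3 := by
        field_simp
        ring
      rw [e]
      have h3 : d ^ 3 * (8 * s - 2 * n * (d + s)) ≤ (s - 1 / 2 * d) * (d + s) ^ 3 := by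
        have h4 : d ^ 3 * (8 * s - 2 * n * (d + s)) ≤ d ^ 3 * (2 * s - 6 * d) := by
          apply mul_le_mul_of_nonneg_left _ (by positivity)
          nlinarith
        refine h4.trans ?_
        have := mul_nonneg hs (pow_pos hd 3).le
        have := mul_nonneg (pow_nonneg hs 2) (pow_pos hd 2).le
        have := mul_nonneg (pow_nonneg hs 3) hd.le
        have := pow_nonneg hs 4
        nlinarith [sq_nonneg (s * d - d ^ 2), pow_pos hd 4]
      have h5 := (div_le_iff₀ (pow_pos hp 3)).2 h3
      linarith
    · intro s hs
      have hp : d + s ≠ 0 := by positivity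
      have := (((hasDerivAt_const s (1 : ℝ)).sub
        ((hasDerivAt_pow 2 s).div_const (4 * ((n : ℝ) + 2)))).add
        ((hasDerivAt_const s (d ^ 3)).div ((hasDerivAt_id s).const_add d) hp))
      refine HasDerivAt.congr_deriv this ?_
      simp
      ring
    · intro s hs
      have hp : d + s ≠ 0 := by positivity
      have := ((((hasDerivAt_id s).const_mul 2).div_const (4 * ((n : ℝ) + 2))).neg.sub
        ((hasDerivAt_const s (d ^ 3)).div (((hasDerivAt_id s).const_add d).pow 2)
          (pow_ne_zero 2 hp)))
      refine HasDerivAt.congr_deriv this ?_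
      simp
      field_simp
      ring
end
end
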